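/- arXiv:2406.13687 — 2 statements merged into one kernel-verified Lean document; each statement's English description precedes it below -/
import Mathlib

section
/- For every integer d ≥ 1, lim_{x→∞} π_d(x)/π(x) = 0, where π_d(x) = card{p ≤ x : p prime and p + d prime} and π(x) is the number of primes ≤ x. -/
open Filter Topology

/-- The prime counting function `π(x)`: the number of primes `p` with `0 ≤ p ≤ x`. -/
noncomputable def primePiR (x : ℝ) : ℕ :=
  ((Finset.range (Nat.floor x + 1)).filter Nat.Prime).card

/-- `π_d(x)`: the number of primes `p` with `0 ≤ p ≤ x` such that `p + d` is also prime. -/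
noncomputable def primePidR (d : ℕ) (x : ℝ) : ℕ :=
  ((Finset.range (Nat.floor x + 1)).filter (fun p => Nat.Prime p ∧ Nat.Prime (p + d))).card

def sw (d r : ℕ) : ℕ := if r ∣ 2 * d then 1 else 2

def sbad (d r n : ℕ) : Prop := r ∣ n ∨ (¬ r ∣ 2 * d ∧ r ∣ n + d)

noncomputable def sg (d r : ℕ) : ℝ := (sw d r : ℝ) / ((r : ℝ) - sw d r)

open Classical in
noncomputable def sh (d r n : ℕ) : ℝ := if sbad d r n then -1 else sg d r

noncomputable def sG (d q : ℕ) : ℝ := ∏ r ∈ q.primeFactors, sg d r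
noncomputable def sH (d q n : ℕ) : ℝ := ∏ r ∈ q.primeFactors, sh d r n

noncomputable def sQ (z : ℕ) : Finset ℕ := (Finset.Icc 1 z).filter Squarefree

noncomputable def sL (d z : ℕ) : ℝ := ∑ q ∈ sQ z, sG d q

lemma sum_crt (a b : ℕ) (ha : 0 < a) (hb : 0 < b) (hab : Nat.Coprime a b) (f G : ℕ → ℝ)
    (hf : ∀ n, f (n % a) = f n) (hG : ∀ n, G (n % b) = G n) :
    ∑ n ∈ Finset.range (a * b), f n * G n =
      (∑ n ∈ Finset.range a, f n) * ∑ n ∈ Finset.range b, G n := by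
  rw [Finset.sum_mul_sum, ← Finset.sum_product']
  refine Finset.sum_nbij (fun n => (n % a, n % b)) ?_ ?_ ?_ ?_
  · intro n _
    simp [Nat.mod_lt _ ha, Nat.mod_lt _ hb]
  · intro m hm n hn h
    simp only [Prod.mk.injEq] at h
    have := (Nat.modEq_and_modEq_iff_modEq_mul hab).1 ⟨h.1, h.2⟩
    simp only [Finset.coe_range, Set.mem_Iio] at hm hn
    exact Nat.ModEq.eq_of_lt_of_lt this hm hn
  · rintro ⟨u, v⟩ huv
    simp only [Finset.coe_product, Finset.coe_range, Set.mem_prod, Set.mem_Iio] at huv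
    refine ⟨Nat.chineseRemainder hab u v, ?_, ?_⟩
    · simpa using Nat.chineseRemainder_lt_mul hab u v ha.ne' hb.ne'
    · have h := (Nat.chineseRemainder hab u v).2
      have h1 : _ % a = u % a := h.1
      have h2 : _ % b = v % b := h.2
      rw [Nat.mod_eq_of_lt huv.1] at h1
      rw [Nat.mod_eq_of_lt huv.2] at h2
      exact Prod.ext h1 h2
  · intro n _
    simp [hf, hG]

lemma sum_crt_prod (P : Finset ℕ) (hP : ∀ p ∈ P, p.Prime) (f : ℕ → ℕ → ℝ)
    (hf : ∀ p n, f p (n % p) = f p n) :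
    ∑ n ∈ Finset.range (∏ p ∈ P, p), ∏ p ∈ P, f p n = ∏ p ∈ P, ∑ n ∈ Finset.range p, f p n := by
  induction P using Finset.induction_on with
  | empty => simp
  | insert p P hp ih =>
    have ih := ih (fun q hq => hP q (Finset.mem_insert_of_mem hq))
    have hpp := hP p (Finset.mem_insert_self _ _)
    simp only [Finset.prod_insert hp]
    rw [← ih]
    apply sum_crt _ _ hpp.pos
    · exact Finset.prod_pos fun q hq => (hP q (Finset.mem_insert_of_mem hq)).pos
    · apply Nat.Coprime.prod_right
      intro q hq
      rw [Nat.coprime_primes hpp (hP q (Finset.mem_insert_of_mem hq))]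
      rintro rfl
      exact hp hq
    · exact hf p
    · intro n
      apply Finset.prod_congr rfl
      intro q hq
      rw [← hf q (n % _), Nat.mod_mod_of_dvd _ (Finset.dvd_prod_of_mem _ hq), hf]

lemma sum_period (T : ℕ) (hT : 0 < T) (F : ℕ → ℝ) (B m : ℝ) (hF : ∀ n, F (n % T) = F n)
    (hB : ∀ n, |F n| ≤ B) (hm : ∑ n ∈ Finset.range T, F n = T * m) (hm0 : 0 ≤ m) (N : ℕ) :
    ∑ n ∈ Finset.range N, F n ≤ N * m + T * B := by
  have hB0 : 0 ≤ B := (abs_nonneg _).trans (hB 0)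
  induction N using Nat.strong_induction_on with
  | _ N ih =>
    rcases lt_or_ge N T with h | h
    · have h1 : ∑ n ∈ Finset.range N, F n ≤ ∑ n ∈ Finset.range N, B :=
        Finset.sum_le_sum fun n _ => (le_abs_self _).trans (hB n)
      simp only [Finset.sum_const, Finset.card_range, nsmul_eq_mul] at h1
      have h2 : (N : ℝ) * B ≤ T * B := by gcongr
      have h3 : 0 ≤ (N : ℝ) * m := by positivity
      linarith
    · obtain ⟨k, rfl⟩ := Nat.exists_eq_add_of_le h
      rw [Finset.sum_range_add, hm]
      have : ∀ n, F (T + n) = F n := fun n => by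
        rw [← hF (T + n), Nat.add_mod_left, hF]
      simp only [this]
      have := ih k (by omega)
      push_cast
      linarith

lemma sw_pos (d r : ℕ) : 1 ≤ sw d r := by unfold sw; split_ifs <;> omega
lemma sw_le (d r : ℕ) : sw d r ≤ 2 := by unfold sw; split_ifs <;> omega
lemma sw_lt (d r : ℕ) (hr : r.Prime) : sw d r + 1 ≤ r := by
  unfold sw; split_ifs with h
  · exact hr.two_le
  · have := hr.two_le
    rcases eq_or_ne r 2 with rfl | h2
    · simp at h
    · omega

lemma sw_ltR (d r : ℕ) (hr : r.Prime) : (sw d r : ℝ) + 1 ≤ r := by exact_mod_cast sw_lt d r hr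

lemma sg_pos (d r : ℕ) (hr : r.Prime) : 0 < sg d r := by
  have := sw_ltR d r hr
  have h1 : (1 : ℝ) ≤ sw d r := by exact_mod_cast sw_pos d r
  unfold sg
  apply div_pos <;> linarith

lemma sg_le (d r : ℕ) (hr : r.Prime) : sg d r ≤ r := by
  have := sw_ltR d r hr
  have h1 : (1 : ℝ) ≤ sw d r := by exact_mod_cast sw_pos d r
  unfold sg
  rw [div_le_iff₀ (by linarith)]
  nlinarith

lemma sh_abs_le (d r n : ℕ) (hr : r.Prime) : |sh d r n| ≤ r := by
  unfold sh
  split_ifs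
  · have : (1 : ℝ) ≤ r := by exact_mod_cast hr.one_le
    simpa using this
  · rw [abs_of_pos (sg_pos d r hr)]
    exact sg_le d r hr

lemma sbad_mod (d r n : ℕ) : sbad d r (n % r) ↔ sbad d r n := by
  unfold sbad
  have h1 : r ∣ n % r ↔ r ∣ n := by simp [Nat.dvd_iff_mod_eq_zero]
  have h2 : r ∣ n % r + d ↔ r ∣ n + d := by simp [Nat.dvd_iff_mod_eq_zero]
  rw [h1, h2]

lemma sh_mod (d r n : ℕ) : sh d r (n % r) = sh d r n := by
  unfold sh
  by_cases h : sbad d r n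
  · rw [if_pos h, if_pos ((sbad_mod d r n).2 h)]
  · rw [if_neg h, if_neg (fun h' => h ((sbad_mod d r n).1 h'))]

open Classical in
lemma card_bad (d r : ℕ) (hr : r.Prime) :
    ((Finset.range r).filter (fun n => sbad d r n)).card = sw d r := by
  unfold sw
  split_ifs with h
  · rw [Finset.card_eq_one]
    refine ⟨0, ?_⟩
    ext n
    simp only [Finset.mem_filter, Finset.mem_range, sbad, h, not_true, false_and, or_false,
      Finset.mem_singleton]
    constructor
    · rintro ⟨h1, h2⟩
      exact Nat.eq_zero_of_dvd_of_lt h2 h1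
    · rintro rfl
      exact ⟨hr.pos, dvd_zero _⟩
  · have hd : ¬ r ∣ d := fun h' => h (h'.mul_left 2)
    have hd' : d % r ≠ 0 := fun h' => hd (Nat.dvd_of_mod_eq_zero h')
    have hlt := Nat.mod_lt d hr.pos
    rw [Finset.card_eq_two]
    refine ⟨0, r - d % r, by omega, ?_⟩
    ext n
    simp only [Finset.mem_filter, Finset.mem_range, sbad, h, not_false_eq_true, true_and,
      Finset.mem_singleton, Finset.mem_insert]
    have key : r ∣ n + d ↔ r ∣ n + d % r := by simp [Nat.dvd_iff_mod_eq_zero]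
    rw [key]
    constructor
    · rintro ⟨h1, h2 | h2⟩
      · exact Or.inl (Nat.eq_zero_of_dvd_of_lt h2 h1)
      · right
        obtain ⟨k, hk⟩ := h2
        have : k = 1 := by
          have : k < 2 := by
            by_contra hc
            have : r * 2 ≤ r * k := Nat.mul_le_mul_left r (by omega)
            omega
          rcases k with _ | _ | k <;> simp_all
        subst this
        omega
    · rintro (rfl | rfl)
      · exact ⟨hr.pos, Or.inl (dvd_zero _)⟩
      · refine ⟨by omega, Or.inr ?_⟩
        rw [Nat.sub_add_cancel hlt.le]

lemma sh_sum_aux (d r : ℕ) (hr : r.Prime) (u v : ℝ) :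
    (open Classical in ∑ n ∈ Finset.range r, if sbad d r n then u else v) =
      sw d r * u + (r - sw d r) * v := by
  classical
  rw [Finset.sum_ite, Finset.sum_const, Finset.sum_const]
  have h1 := card_bad d r hr
  have h2 := Finset.card_filter_add_card_filter_not (s := Finset.range r) (fun n => sbad d r n)
  rw [Finset.card_range] at h2
  have h3 : (((Finset.range r).filter (fun n => ¬ sbad d r n)).card : ℝ) = r - sw d r := by
    rw [← h1, eq_sub_iff_add_eq]
    exact_mod_cast (by omega)
  simp only [nsmul_eq_mul]
  rw [← h3, ← h1]

lemma sh_sum (d r : ℕ) (hr : r.Prime) : ∑ n ∈ Finset.range r, sh d r n = 0 := by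
  unfold sh
  rw [sh_sum_aux d r hr]
  have := sw_ltR d r hr
  unfold sg
  rw [mul_div_cancel₀ _ (by linarith)]
  ring

lemma sh_sum_sq (d r : ℕ) (hr : r.Prime) :
    ∑ n ∈ Finset.range r, sh d r n ^ 2 = r * sg d r := by
  unfold sh
  simp only [ite_pow]
  rw [sh_sum_aux d r hr]
  have := sw_ltR d r hr
  have h0 : (r : ℝ) - sw d r ≠ 0 := by linarith
  unfold sg
  field_simp
  ring

lemma sG_pos (d q : ℕ) : 0 < sG d q :=
  Finset.prod_pos fun r hr => sg_pos d r (Nat.prime_of_mem_primeFactors hr)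

lemma sH_abs_le (d q n : ℕ) (hq : 0 < q) : |sH d q n| ≤ q := by
  unfold sH
  rw [Finset.abs_prod]
  calc _ ≤ ∏ r ∈ q.primeFactors, (r : ℝ) :=
        Finset.prod_le_prod (fun _ _ => abs_nonneg _)
          fun r hr => sh_abs_le d r n (Nat.prime_of_mem_primeFactors hr)
    _ ≤ q := by
      have := Nat.le_of_dvd hq (Nat.prod_primeFactors_dvd q)
      rw [← Nat.cast_prod]
      exact Nat.cast_le.2 this

lemma pair_sum (d q q' z N : ℕ) (hq : q ∈ sQ z) (hq' : q' ∈ sQ z) :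
    ∑ n ∈ Finset.range N, sH d q n * sH d q' n ≤
      (if q = q' then N * sG d q else 0) + (z : ℝ) ^ 4 := by
  simp only [sQ, Finset.mem_filter, Finset.mem_Icc] at hq hq'
  obtain ⟨⟨h1, h2⟩, h3⟩ := hq
  obtain ⟨⟨h1', h2'⟩, h3'⟩ := hq'
  set A := q.primeFactors with hA
  set B := q'.primeFactors with hB
  have hAp : ∀ p ∈ A, p.Prime := fun p hp => Nat.prime_of_mem_primeFactors hp
  have hBp : ∀ p ∈ B, p.Prime := fun p hp => Nat.prime_of_mem_primeFactors hp
  have hPp : ∀ p ∈ A ∪ B, p.Prime := fun p hp => by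
    rcases Finset.mem_union.1 hp with h | h
    exacts [hAp p h, hBp p h]
  set T := ∏ p ∈ A ∪ B, p with hT
  have hT0 : 0 < T := Finset.prod_pos fun p hp => (hPp p hp).pos
  have hTle : T ≤ z ^ 2 := by
    have e1 : T * ∏ p ∈ A ∩ B, p = (∏ p ∈ A, p) * ∏ p ∈ B, p := Finset.prod_union_inter
    have e2 : 1 ≤ ∏ p ∈ A ∩ B, p :=
      Finset.prod_pos fun p hp => (hAp p (Finset.mem_inter.1 hp).1).pos
    rw [Nat.prod_primeFactors_of_squarefree h3, Nat.prod_primeFactors_of_squarefree h3'] at e1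
    calc T ≤ T * ∏ p ∈ A ∩ B, p := Nat.le_mul_of_pos_right _ e2
      _ = q * q' := e1
      _ ≤ z ^ 2 := by rw [sq]; exact Nat.mul_le_mul h2 h2'
  let f : ℕ → ℕ → ℝ := fun p n => (if p ∈ A then sh d p n else 1) * (if p ∈ B then sh d p n else 1)
  have hfm : ∀ p n, f p (n % p) = f p n := fun p n => by simp only [f, sh_mod]
  have hHf : ∀ n, sH d q n * sH d q' n = ∏ p ∈ A ∪ B, f p n := by
    intro n
    simp only [f, Finset.prod_mul_distrib, Finset.prod_ite_mem]
    rw [Finset.inter_eq_right.2 Finset.subset_union_left,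
      Finset.inter_eq_right.2 Finset.subset_union_right]
    rfl
  have hsum := sum_crt_prod (A ∪ B) hPp f hfm
  rw [← hT] at hsum
  simp only [← hHf] at hsum
  have hbd : ∀ n, |sH d q n * sH d q' n| ≤ (z : ℝ) ^ 2 := by
    intro n
    rw [abs_mul, sq]
    have a1 : |sH d q n| ≤ z := (sH_abs_le d q n h1).trans (by exact_mod_cast h2)
    have a2 : |sH d q' n| ≤ z := (sH_abs_le d q' n h1').trans (by exact_mod_cast h2')
    gcongr
  have hper : ∀ n, sH d q (n % T) * sH d q' (n % T) = sH d q n * sH d q' n := by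
    intro n
    rw [hHf, hHf]
    apply Finset.prod_congr rfl
    intro p hp
    rw [← hfm p (n % _), Nat.mod_mod_of_dvd _ (Finset.dvd_prod_of_mem _ hp), hfm]
  have hfin : (T : ℝ) * (z : ℝ) ^ 2 ≤ (z : ℝ) ^ 4 := by
    have : (T : ℝ) ≤ (z : ℝ) ^ 2 := by exact_mod_cast hTle
    calc _ ≤ (z : ℝ) ^ 2 * (z : ℝ) ^ 2 := by gcongr
      _ = _ := by ring
  split_ifs with h
  · subst h
    refine (sum_period T hT0 _ ((z : ℝ) ^ 2) (sG d q) hper hbd ?_ (sG_pos d q).le N).trans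
      (by linarith)
    rw [hsum, hT, Nat.cast_prod, Finset.union_self, sG, ← Finset.prod_mul_distrib]
    apply Finset.prod_congr rfl
    intro p hp
    rw [← sh_sum_sq d p (hBp p hp)]
    apply Finset.sum_congr rfl
    intro n _
    have hp' : p ∈ B := hp
    simp [f, hp, hp', sq]
  · refine (sum_period T hT0 _ ((z : ℝ) ^ 2) 0 hper hbd ?_ le_rfl N).trans
      (by linarith)
    rw [hsum, mul_zero]
    have hAB : A ≠ B := by
      intro hAB
      apply h
      rw [← Nat.prod_primeFactors_of_squarefree h3, ← Nat.prod_primeFactors_of_squarefree h3',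
        ← hA, hAB]
    have : ∃ p, (p ∈ A ∧ p ∉ B) ∨ (p ∉ A ∧ p ∈ B) := by
      by_contra hc
      push Not at hc
      apply hAB
      ext p
      have := hc p
      tauto
    obtain ⟨p, hp⟩ := this
    have hpU : p ∈ A ∪ B := by rw [Finset.mem_union]; tauto
    apply Finset.prod_eq_zero hpU
    rw [← sh_sum d p (hPp p hpU)]
    apply Finset.sum_congr rfl
    intro n _
    rcases hp with ⟨ha, hb⟩ | ⟨ha, hb⟩ <;> simp [f, ha, hb]

lemma sieve_bound (d z N : ℕ) (S : Finset ℕ) (hS : S ⊆ Finset.range N)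
    (hbad : ∀ n ∈ S, ∀ r, r.Prime → r ≤ z → ¬ sbad d r n) :
    (S.card : ℝ) * sL d z ^ 2 ≤ N * sL d z + (z : ℝ) ^ 6 := by
  have e1 : (S.card : ℝ) * sL d z ^ 2 = ∑ n ∈ S, (∑ q ∈ sQ z, sH d q n) ^ 2 := by
    rw [← nsmul_eq_mul, ← Finset.sum_const]
    apply Finset.sum_congr rfl
    intro n hn
    congr 1
    apply Finset.sum_congr rfl
    intro q hq
    simp only [sQ, Finset.mem_filter, Finset.mem_Icc] at hq
    apply Finset.prod_congr rfl
    intro r hr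
    have := hbad n hn r (Nat.prime_of_mem_primeFactors hr)
      ((Nat.le_of_mem_primeFactors hr).trans hq.1.2)
    simp [sh, this]
  have e2 : ∑ n ∈ S, (∑ q ∈ sQ z, sH d q n) ^ 2 ≤
      ∑ n ∈ Finset.range N, (∑ q ∈ sQ z, sH d q n) ^ 2 :=
    Finset.sum_le_sum_of_subset_of_nonneg hS fun _ _ _ => sq_nonneg _
  have e3 : ∑ n ∈ Finset.range N, (∑ q ∈ sQ z, sH d q n) ^ 2 =
      ∑ q ∈ sQ z, ∑ q' ∈ sQ z, ∑ n ∈ Finset.range N, sH d q n * sH d q' n := by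
    simp only [sq, Finset.sum_mul_sum]
    rw [Finset.sum_comm]
    apply Finset.sum_congr rfl
    intro q _
    rw [Finset.sum_comm]
  have e4 : ∑ q ∈ sQ z, ∑ q' ∈ sQ z, ∑ n ∈ Finset.range N, sH d q n * sH d q' n ≤
      ∑ q ∈ sQ z, ∑ q' ∈ sQ z, ((if q = q' then N * sG d q else 0) + (z : ℝ) ^ 4) :=
    Finset.sum_le_sum fun q hq => Finset.sum_le_sum fun q' hq' => pair_sum d q q' z N hq hq'
  have e5 : ∑ q ∈ sQ z, ∑ q' ∈ sQ z, ((if q = q' then N * sG d q else 0) + (z : ℝ) ^ 4) =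
      N * sL d z + ((sQ z).card : ℝ) ^ 2 * (z : ℝ) ^ 4 := by
    simp only [Finset.sum_add_distrib, Finset.sum_ite_eq, Finset.sum_const, nsmul_eq_mul, sL,
      Finset.mul_sum]
    congr 1
    · apply Finset.sum_congr rfl
      intro q hq
      simp [hq]
    · ring
  have e6 : ((sQ z).card : ℝ) ≤ z := by
    have : (sQ z).card ≤ z := by
      unfold sQ
      exact (Finset.card_filter_le _ _).trans (by simp)
    exact_mod_cast this
  have e7 : ((sQ z).card : ℝ) ^ 2 * (z : ℝ) ^ 4 ≤ (z : ℝ) ^ 6 := by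
    calc _ ≤ (z : ℝ) ^ 2 * (z : ℝ) ^ 4 := by gcongr
      _ = _ := by ring
  linarith

def sc (d n : ℕ) : ℕ := (n.primeFactorsList.map (sw d)).prod

lemma sc_mul (d a b : ℕ) (ha : a ≠ 0) (hb : b ≠ 0) : sc d (a * b) = sc d a * sc d b := by
  unfold sc
  rw [((Nat.perm_primeFactorsList_mul ha hb).map (sw d)).prod_eq, List.map_append, List.prod_append]

lemma sc_prime (d p : ℕ) (hp : p.Prime) : sc d p = sw d p := by
  simp [sc, Nat.primeFactorsList_prime hp]

noncomputable def sf (d : ℕ) : ℕ →* ℝ where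
  toFun n := (sc d n : ℝ) / n
  map_one' := by simp [sc]
  map_mul' a b := by
    rcases eq_or_ne a 0 with rfl | ha
    · simp
    rcases eq_or_ne b 0 with rfl | hb
    · simp
    rw [sc_mul d a b ha hb]
    push_cast
    rw [mul_div_mul_comm]

lemma sf_apply (d n : ℕ) : sf d n = (sc d n : ℝ) / n := rfl

lemma sf_nonneg (d n : ℕ) : 0 ≤ sf d n := by rw [sf_apply]; positivity

lemma sf_prime_lt (d p : ℕ) (hp : p.Prime) : sf d p < 1 := by
  rw [sf_apply, sc_prime d p hp, div_lt_one (by exact_mod_cast hp.pos)]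
  have := sw_ltR d p hp
  linarith

lemma sG_eq (d q : ℕ) (hq : Squarefree q) :
    sG d q = sf d q * ∏ p ∈ q.primeFactors, (1 - sf d p)⁻¹ := by
  have : sf d q = ∏ p ∈ q.primeFactors, sf d p := by
    rw [← map_prod, Nat.prod_primeFactors_of_squarefree hq]
  rw [this, ← Finset.prod_mul_distrib]
  apply Finset.prod_congr rfl
  intro p hp
  have hp := Nat.prime_of_mem_primeFactors hp
  have h0 : (p : ℝ) ≠ 0 := by exact_mod_cast hp.ne_zero
  have := sw_ltR d p hp
  have h1 : (p : ℝ) - sw d p ≠ 0 := by linarith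
  rw [sf_apply, sc_prime d p hp, sg]
  have h2 : 1 - (sw d p : ℝ) / p = (p - sw d p) / p := by field_simp
  rw [h2]
  field_simp

def srad (n : ℕ) : ℕ := ∏ p ∈ n.primeFactors, p

lemma srad_squarefree (n : ℕ) : Squarefree (srad n) := by
  unfold srad
  rw [← Nat.radical_eq_prod_primeFactors]
  exact UniqueFactorizationMonoid.squarefree_radical

lemma srad_dvd (n : ℕ) : srad n ∣ n := Nat.prod_primeFactors_dvd n

lemma srad_primeFactors (n : ℕ) : (srad n).primeFactors = n.primeFactors :=
  Nat.primeFactors_prod fun _ hp => Nat.prime_of_mem_primeFactors hp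

lemma fiber_le (d q z : ℕ) (hq : Squarefree q) :
    ∑ n ∈ Finset.Icc 1 z with srad n = q, sf d n ≤ sG d q := by
  have hq0 : 0 < q := Nat.pos_of_ne_zero hq.ne_zero
  set U := (Finset.Icc 1 z).filter (fun n => srad n = q) with hU
  have hUd : ∀ n ∈ U, q * (n / q) = n := by
    intro n hn
    rw [hU, Finset.mem_filter] at hn
    apply Nat.mul_div_cancel'
    rw [← hn.2]
    exact srad_dvd n
  have hs := (EulerProduct.summable_and_hasSum_factoredNumbers_prod_filter_prime_geometric
    (f := sf d) (fun {p} hp => by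
      rw [Real.norm_of_nonneg (sf_nonneg d p)]; exact sf_prime_lt d p hp) q.primeFactors).2
  have hs2 : HasSum ((Nat.factoredNumbers q.primeFactors).indicator (sf d))
      (∏ p ∈ q.primeFactors with p.Prime, (1 - sf d p)⁻¹) := hasSum_subtype_iff_indicator.1 hs
  rw [Finset.filter_true_of_mem (fun p hp => Nat.prime_of_mem_primeFactors hp)] at hs2
  have hle := sum_le_hasSum (U.image (fun n => n / q))
    (fun i _ => Set.indicator_nonneg (fun n _ => sf_nonneg d n) i) hs2
  rw [sG_eq d q hq]
  have e1 : ∑ n ∈ U, sf d n = sf d q * ∑ n ∈ U, sf d (n / q) := by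
    rw [Finset.mul_sum]
    apply Finset.sum_congr rfl
    intro n hn
    rw [← map_mul, hUd n hn]
  rw [e1]
  apply mul_le_mul_of_nonneg_left _ (sf_nonneg d q)
  refine le_trans (le_of_eq ?_) hle
  rw [Finset.sum_image]
  · apply Finset.sum_congr rfl
    intro n hn
    have h1 := hUd n hn
    rw [Set.indicator_of_mem]
    rw [Nat.mem_factoredNumbers_iff_primeFactors_subset]
    rw [hU, Finset.mem_filter, Finset.mem_Icc] at hn
    constructor
    · intro h
      rw [h] at h1
      omega
    · rw [← hn.2, srad_primeFactors]
      apply Nat.primeFactors_mono (Nat.div_dvd_of_dvd (srad_dvd n)) (by omega)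
  · intro m hm n hn h
    simp only at h
    rw [← hUd m hm, ← hUd n hn, h]

lemma sum_sf_le (d z : ℕ) : ∑ n ∈ Finset.Icc 1 z, sf d n ≤ sL d z := by
  rw [← Finset.sum_fiberwise_of_maps_to (s := Finset.Icc 1 z) (t := sQ z) (g := srad)]
  · apply Finset.sum_le_sum
    intro q hq
    rw [sQ, Finset.mem_filter] at hq
    exact fiber_le d q z hq.2
  · intro n hn
    rw [Finset.mem_Icc] at hn
    rw [sQ, Finset.mem_filter, Finset.mem_Icc]
    exact ⟨⟨Nat.pos_of_ne_zero (srad_squarefree n).ne_zero,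
      (Nat.le_of_dvd hn.1 (srad_dvd n)).trans hn.2⟩, srad_squarefree n⟩

lemma sc_ge (d n : ℕ) :
    (n.divisors.filter (fun a => Nat.Coprime a (2 * d))).card ≤ sc d n := by
  induction n using induction_on_primes with
  | zero => simp
  | one => exact (Finset.card_filter_le _ _).trans (by simp [sc])
  | prime_mul p a hp ih =>
    rcases eq_or_ne a 0 with rfl | ha
    · simp
    rw [sc_mul d p a hp.ne_zero ha, sc_prime d p hp]
    set D := a.divisors.filter (fun a => Nat.Coprime a (2 * d)) with hD
    unfold sw
    split_ifs with h
    · rw [one_mul]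
      refine (Finset.card_le_card ?_).trans ih
      intro b hb
      simp only [hD, Finset.mem_filter, Nat.mem_divisors] at hb ⊢
      refine ⟨⟨?_, ha⟩, hb.2⟩
      exact Nat.Coprime.dvd_of_dvd_mul_left (Nat.Coprime.coprime_dvd_right h hb.2) hb.1.1
    · have hsub : (p * a).divisors.filter (fun a => Nat.Coprime a (2 * d)) ⊆
          D ∪ D.image (fun b => p * b) := by
        intro b hb
        simp only [hD, Finset.mem_union, Finset.mem_image, Finset.mem_filter,
          Nat.mem_divisors] at hb ⊢
        by_cases hpb : p ∣ b
        · right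
          obtain ⟨c, rfl⟩ := hpb
          exact ⟨c, ⟨⟨Nat.dvd_of_mul_dvd_mul_left hp.pos hb.1.1, ha⟩,
            Nat.Coprime.coprime_mul_left hb.2⟩, rfl⟩
        · left
          refine ⟨⟨?_, ha⟩, hb.2⟩
          exact Nat.Coprime.dvd_of_dvd_mul_left
            ((Nat.Prime.coprime_iff_not_dvd hp).2 hpb).symm hb.1.1
      calc _ ≤ _ := Finset.card_le_card hsub
        _ ≤ D.card + (D.image (fun b => p * b)).card := Finset.card_union_le _ _
        _ ≤ D.card + D.card := Nat.add_le_add_left Finset.card_image_le _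
        _ ≤ 2 * sc d a := by omega

lemma sum_sf_ge (d y : ℕ) :
    (∑ a ∈ Finset.Icc 1 y with Nat.Coprime a (2 * d), (1 : ℝ) / a) *
      (∑ b ∈ Finset.Icc 1 y, (1 : ℝ) / b) ≤ ∑ n ∈ Finset.Icc 1 (y ^ 2), sf d n := by
  rw [Finset.sum_mul_sum, ← Finset.sum_product']
  rw [← Finset.sum_fiberwise_of_maps_to (t := Finset.Icc 1 (y ^ 2)) (g := fun ab : ℕ × ℕ => ab.1 * ab.2)]
  · apply Finset.sum_le_sum
    intro n hn
    rw [Finset.mem_Icc] at hn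
    set V := (((Finset.Icc 1 y).filter (fun a => Nat.Coprime a (2 * d))) ×ˢ
      (Finset.Icc 1 y)).filter (fun ab : ℕ × ℕ => ab.1 * ab.2 = n) with hV
    have e1 : ∑ ab ∈ V, (1 : ℝ) / ab.1 * (1 / ab.2) = V.card * (1 / n) := by
      rw [← nsmul_eq_mul, ← Finset.sum_const]
      apply Finset.sum_congr rfl
      intro ab hab
      rw [hV, Finset.mem_filter] at hab
      rw [← hab.2]
      push_cast
      rw [one_div_mul_one_div]
    rw [e1, sf_apply, mul_one_div]
    gcongr
    refine le_trans ?_ (sc_ge d n)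
    apply Finset.card_le_card_of_injOn Prod.fst
    · intro ab hab
      simp only [hV, Finset.coe_filter, Finset.mem_product, Finset.mem_filter, Set.mem_ofPred_eq,
        Nat.mem_divisors] at hab ⊢
      exact ⟨⟨⟨_, hab.2.symm⟩, by omega⟩, hab.1.1.2⟩
    · rintro ⟨a, b⟩ hab ⟨a', b'⟩ hab' h
      simp only [hV, Finset.coe_filter, Finset.mem_product, Finset.mem_filter, Set.mem_ofPred_eq,
        Finset.mem_Icc] at hab hab' h
      subst h
      have := hab.2.trans hab'.2.symm
      rw [Nat.eq_of_mul_eq_mul_left (by omega) this]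
  · rintro ⟨a, b⟩ hab
    simp only [Finset.mem_product, Finset.mem_filter, Finset.mem_Icc] at hab ⊢
    refine ⟨Nat.mul_pos hab.1.1.1 hab.2.1, ?_⟩
    rw [sq]
    exact Nat.mul_le_mul hab.1.1.2 hab.2.2

noncomputable def sK (d y : ℕ) : ℝ :=
  ∑ a ∈ Finset.range y, ({n : ℕ | (n : ZMod (2 * d)) = 1}.indicator fun n : ℕ => (1 : ℝ) / n) a

lemma sK_tendsto (d : ℕ) (hd : 1 ≤ d) : Tendsto (sK d) atTop atTop := by
  refine (not_summable_iff_tendsto_nat_atTop_of_nonneg ?_).1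
    (Real.not_summable_indicator_one_div_natCast (m := 2 * d) (by omega) 1)
  intro n
  exact Set.indicator_nonneg (fun n _ => by positivity) n

lemma sK_le (d y : ℕ) :
    sK d y ≤ ∑ a ∈ Finset.Icc 1 y with Nat.Coprime a (2 * d), (1 : ℝ) / a := by
  unfold sK
  classical
  simp only [Set.indicator_apply, Set.mem_ofPred_eq]
  rw [← Finset.sum_filter]
  have : ∀ a ∈ (Finset.range y).filter (fun a : ℕ => (a : ZMod (2 * d)) = 1),
      a ∉ (Finset.Icc 1 y).filter (fun a => Nat.Coprime a (2 * d)) → a = 0 := by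
    intro a ha h
    simp only [Finset.mem_filter, Finset.mem_range, Finset.mem_Icc] at ha h
    by_contra h0
    apply h
    refine ⟨by omega, ?_⟩
    rw [← ZMod.isUnit_iff_coprime, ha.2]
    exact isUnit_one
  rw [← Finset.sum_filter_add_sum_filter_not _
    (fun a => a ∈ (Finset.Icc 1 y).filter (fun a => Nat.Coprime a (2 * d)))]
  have h0 : ∑ x ∈ ((Finset.range y).filter (fun a : ℕ => (a : ZMod (2 * d)) = 1)).filter
      (fun a => a ∉ (Finset.Icc 1 y).filter (fun a => Nat.Coprime a (2 * d))), (1 : ℝ) / x = 0 := by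
    apply Finset.sum_eq_zero
    intro a ha
    rw [Finset.mem_filter] at ha
    simp [this a ha.1 ha.2]
  rw [h0, add_zero]
  apply Finset.sum_le_sum_of_subset_of_nonneg
  · intro a ha
    exact (Finset.mem_filter.1 ha).2
  · intro a _ _
    positivity

lemma sK_nonneg (d y : ℕ) : 0 ≤ sK d y :=
  Finset.sum_nonneg fun n _ => Set.indicator_nonneg (fun n _ => by positivity) n

lemma sL_ge (d y : ℕ) : sK d y * Real.log (y + 1) ≤ sL d (y ^ 2) := by
  refine le_trans ?_ ((sum_sf_ge d y).trans (sum_sf_le d (y ^ 2)))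
  have h := log_add_one_le_harmonic y
  rw [harmonic_eq_sum_Icc] at h
  push_cast at h
  have h0 : 0 ≤ Real.log ((y : ℝ) + 1) := Real.log_nonneg (by linarith [Nat.cast_nonneg (α := ℝ) y])
  have h1 := sK_nonneg d y
  simp only [one_div] at *
  have h2 := sK_le d y
  simp only [one_div] at h2
  apply mul_le_mul h2 h h0 (h1.trans h2)

lemma sL_one_le (d z : ℕ) (hz : 1 ≤ z) : 1 ≤ sL d z := by
  have : sG d 1 ≤ sL d z :=
    Finset.single_le_sum (f := sG d) (fun q _ => (sG_pos d q).le) (by simp [sQ, hz])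
  simpa [sG] using this

lemma pid_le (d y : ℕ) (hy : 1 ≤ y) (x : ℝ) :
    (primePidR d x : ℝ) ≤ (y : ℝ) ^ 2 + 1 + ((⌊x⌋₊ : ℝ) + 1) / sL d (y ^ 2) + (y : ℝ) ^ 12 := by
  set N := ⌊x⌋₊ + 1 with hN
  set S := (Finset.range N).filter
    (fun p => (Nat.Prime p ∧ Nat.Prime (p + d)) ∧ y ^ 2 < p) with hS
  have h1 : primePidR d x ≤ (y ^ 2 + 1) + S.card := by
    unfold primePidR
    rw [← Finset.card_range (y ^ 2 + 1)]
    refine (Finset.card_le_card ?_).trans (Finset.card_union_le _ _)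
    intro p hp
    simp only [hS, Finset.mem_union, Finset.mem_filter, Finset.mem_range] at hp ⊢
    by_cases h : y ^ 2 < p
    · exact Or.inr ⟨hp.1, hp.2, h⟩
    · left; omega
  have h2 := sieve_bound d (y ^ 2) N S (Finset.filter_subset _ _) (by
    intro n hn r hr hrz hb
    simp only [hS, Finset.mem_filter] at hn
    obtain ⟨_, ⟨hp, hpd⟩, hlt⟩ := hn
    rcases hb with hb | ⟨_, hb⟩
    · have := (Nat.prime_dvd_prime_iff_eq hr hp).1 hb
      omega
    · have := (Nat.prime_dvd_prime_iff_eq hr hpd).1 hb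
      omega)
  have hL := sL_one_le d (y ^ 2) (Nat.one_le_pow _ _ hy)
  set L := sL d (y ^ 2)
  have hL0 : 0 < L := by linarith
  have h3 : (S.card : ℝ) ≤ ((⌊x⌋₊ : ℝ) + 1) / L + (y : ℝ) ^ 12 := by
    have : (S.card : ℝ) ≤ (N * L + ((y ^ 2 : ℕ) : ℝ) ^ 6) / L ^ 2 := by
      rw [le_div_iff₀ (by positivity)]; exact h2
    refine this.trans ?_
    rw [add_div]
    apply add_le_add
    · apply le_of_eq
      rw [hN]; push_cast
      field_simp
    · push_cast
      rw [← pow_mul]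
      apply div_le_self (by positivity)
      exact one_le_pow₀ hL
  have h4 : (primePidR d x : ℝ) ≤ ((y : ℝ) ^ 2 + 1) + S.card := by exact_mod_cast h1
  linarith

lemma pi_lower : ∀ᶠ x : ℝ in atTop, x / (4 * Real.log x) ≤ (primePiR x : ℝ) := by
  have hlo := (Real.isLittleO_log_id_atTop).bound (show (0 : ℝ) < 1 / 16 by norm_num)
  have hlo2 := (tendsto_atTop_add_const_right atTop (2 : ℝ) tendsto_id).eventually hlo
  filter_upwards [hlo2, eventually_gt_atTop 100] with x hx hx1
  have h := Chebyshev.pi_ge' (x := x) (by linarith)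
  have e : primePiR x = ⌊x⌋₊.primeCounting := by
    unfold primePiR Nat.primeCounting Nat.primeCounting'
    rw [Nat.count_eq_card_filter_range]
  rw [e]
  refine le_trans ?_ h
  have hlog : 0 < Real.log x := Real.log_pos (by linarith)
  rw [← div_div]
  gcongr
  simp only [id, Real.norm_eq_abs] at hx
  have h1 := (le_abs_self _).trans hx
  rw [abs_of_pos (by linarith)] at h1
  have h2 := Real.log_two_gt_d9
  nlinarith

theorem pid_over_pi_tendsto_zero (d : ℕ) (hd : 1 ≤ d) :
    Tendsto (fun x : ℝ => (primePidR d x : ℝ) / (primePiR x : ℝ)) atTop (nhds 0) := by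
  have hyT : Tendsto (fun x : ℝ => ⌊x ^ (1 / 24 : ℝ)⌋₊) atTop atTop :=
    tendsto_nat_floor_atTop.comp (tendsto_rpow_atTop (by norm_num))
  have hKT : Tendsto (fun x : ℝ => sK d ⌊x ^ (1 / 24 : ℝ)⌋₊) atTop atTop :=
    (sK_tendsto d hd).comp hyT
  have hlim1 : Tendsto (fun x : ℝ => 192 / sK d ⌊x ^ (1 / 24 : ℝ)⌋₊) atTop (nhds 0) :=
    hKT.const_div_atTop 192
  have hlim2 : Tendsto (fun x : ℝ => 12 * (Real.log x / x ^ (1 / 2 : ℝ))) atTop (nhds 0) := by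
    have := (isLittleO_log_rpow_atTop (r := 1 / 2) (by norm_num)).tendsto_div_nhds_zero
    simpa using this.const_mul 12
  have hlim := hlim1.add hlim2
  rw [add_zero] at hlim
  refine squeeze_zero' (Eventually.of_forall fun x => by positivity) ?_ hlim
  filter_upwards [pi_lower, eventually_gt_atTop 10, hKT.eventually_ge_atTop 1,
    hyT.eventually_ge_atTop 1] with x hpi hx hK hy
  have hx0 : 0 < x := by linarith
  set y := ⌊x ^ (1 / 24 : ℝ)⌋₊ with hydef
  set K := sK d y
  set s := x ^ (1 / 2 : ℝ) with hs
  have hlog : 0 < Real.log x := Real.log_pos (by linarith)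
  have hs1 : 1 ≤ s := Real.one_le_rpow (by linarith) (by norm_num)
  have hss : s * s = x := by
    rw [hs, ← Real.rpow_add hx0]; norm_num
  have hyle : (y : ℝ) ≤ x ^ (1 / 24 : ℝ) := Nat.floor_le (by positivity)
  have hy12 : (y : ℝ) ^ 12 ≤ s := by
    calc (y : ℝ) ^ 12 ≤ (x ^ (1 / 24 : ℝ)) ^ 12 := by gcongr
      _ = s := by rw [hs, ← Real.rpow_natCast, ← Real.rpow_mul hx0.le]; norm_num
  have hy1 : (1 : ℝ) ≤ y := by exact_mod_cast hy
  have hy2 : (y : ℝ) ^ 2 ≤ s := (pow_le_pow_right₀ hy1 (by norm_num)).trans hy12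
  have hlogy : Real.log x / 24 ≤ Real.log (y + 1) := by
    have h1 : x ^ (1 / 24 : ℝ) ≤ y + 1 := (Nat.lt_floor_add_one _).le
    have h2 := Real.log_le_log (by positivity) h1
    rw [Real.log_rpow hx0] at h2
    linarith
  have hL : K * (Real.log x / 24) ≤ sL d (y ^ 2) :=
    le_trans (by gcongr) (sL_ge d y)
  have hpid := pid_le d y hy x
  have hfl : (⌊x⌋₊ : ℝ) + 1 ≤ 2 * x := by
    have := Nat.floor_le hx0.le
    linarith
  have hmain : ((⌊x⌋₊ : ℝ) + 1) / sL d (y ^ 2) ≤ 2 * x / (K * (Real.log x / 24)) := by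
    gcongr
  have hub : (primePidR d x : ℝ) ≤ 3 * s + 2 * x / (K * (Real.log x / 24)) := by linarith
  calc (primePidR d x : ℝ) / (primePiR x : ℝ)
      ≤ (3 * s + 2 * x / (K * (Real.log x / 24))) / (x / (4 * Real.log x)) := by gcongr
    _ = 192 / K + 12 * (Real.log x / s) := by
      have hl : Real.log x ≠ 0 := hlog.ne'
      have hs0 : s ≠ 0 := by linarith
      have hK0 : K ≠ 0 := by linarith
      clear_value K s
      generalize Real.log x = l at hl
      rw [← hss]
      field_simp
      ring
end

section
/- The set ℙ of primes and their negatives has counting autocorrelation δ_0 with respect to the van Hove sequence A_n = [−n, n]: writing F_n = ℙ ∩ [−n, n], for every continuous compactly supported f : ℝ → ℂ one has (1/card F_n)·Σ_{x,y∈F_n} f(x−y) → f(0) as n → ∞. -/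
open Filter Topology Set

/-- The set of prime numbers together with their negatives, as a subset of `ℝ`. -/
def PrimesR : Set ℝ := {x | ∃ p : ℕ, p.Prime ∧ (x = (p : ℝ) ∨ x = -(p : ℝ))}

/-- The (counting-normalised) autocorrelation sum of the finite sample `F` applied to a
test function `f`; interpreted as `0` when `F = ∅` (since then `(F.ncard : ℂ)⁻¹ = 0`). -/
noncomputable def autoCorr (F : Set ℝ) (f : ℝ → ℂ) : ℂ :=
  ((F.ncard : ℂ))⁻¹ * ∑ᶠ x ∈ F, ∑ᶠ y ∈ F, f (x - y)

open ArithmeticFunction in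
/-- Ramanujan sum. -/
noncomputable def ramC (l : ℕ) (z : ℤ) : ℝ :=
  ∑ d ∈ l.divisors, if (d : ℤ) ∣ z then (d : ℝ) * (ArithmeticFunction.moebius (l / d) : ℝ) else 0

lemma ramC_coprime {l : ℕ} {z : ℤ} (hl : l ≠ 0) (h : Nat.Coprime l z.natAbs) :
    ramC l z = (ArithmeticFunction.moebius l : ℝ) := by
  unfold ramC
  rw [Finset.sum_eq_single 1]
  · simp
  · intro d hd hd1
    rw [if_neg]
    intro hdz
    apply hd1
    have h1 : d ∣ l := Nat.dvd_of_mem_divisors hd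
    have h2 : d ∣ z.natAbs := Int.natCast_dvd.mp hdz
    exact Nat.eq_one_of_dvd_coprimes h h1 h2
  · intro h'; simp [hl] at h'

lemma count_ap (n : ℕ) (W d : ℕ) (hW : 0 < W) (hd : 0 < d) (hc : Nat.Coprime W d) (a : ℤ) :
    |((Finset.card {z ∈ Finset.Ioc (-(n:ℤ) - 1) n | z ≡ a [ZMOD W] ∧ (d:ℤ) ∣ z} : ℕ) : ℝ)
      - (2 * n + 1) / ((W : ℝ) * d)| ≤ 1 := by
  obtain ⟨v, hv1, hv2⟩ : ∃ v : ℤ, v ≡ a [ZMOD W] ∧ v ≡ 0 [ZMOD d] := by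
    have hg : IsCoprime (W:ℤ) (d:ℤ) := Nat.isCoprime_iff_coprime.mpr hc
    obtain ⟨s, t, hst⟩ := hg
    refine ⟨a * (t * d), ?_, ?_⟩
    · rw [Int.modEq_iff_dvd]
      exact ⟨a * s, by linear_combination (-a) * hst⟩
    · rw [Int.modEq_zero_iff_dvd]
      exact ⟨a * t, by ring⟩
  have hset : ({z ∈ Finset.Ioc (-(n:ℤ) - 1) n | z ≡ a [ZMOD W] ∧ (d:ℤ) ∣ z} : Finset ℤ)
      = {z ∈ Finset.Ioc (-(n:ℤ) - 1) n | z ≡ v [ZMOD ((W * d : ℕ) : ℤ)]} := by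
    apply Finset.filter_congr
    intro z _
    push_cast
    rw [← Int.modEq_and_modEq_iff_modEq_mul (by simpa using hc)]
    constructor
    · rintro ⟨h1, h2⟩
      exact ⟨h1.trans hv1.symm, (Int.modEq_zero_iff_dvd.mpr h2).trans hv2.symm⟩
    · rintro ⟨h1, h2⟩
      exact ⟨h1.trans hv1, Int.modEq_zero_iff_dvd.mp (h2.trans hv2)⟩
  rw [hset]
  have hr : 0 < W * d := Nat.mul_pos hW hd
  have key := Int.Ioc_filter_modEq_card (-(n:ℤ) - 1) n (r := ((W*d : ℕ):ℤ)) (by exact_mod_cast hr) v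
  set c := Finset.card {z ∈ Finset.Ioc (-(n:ℤ) - 1) n | z ≡ v [ZMOD ((W * d : ℕ) : ℤ)]} with hcdef
  have hr' : (0:ℚ) < ((W * d : ℕ) : ℚ) := by exact_mod_cast hr
  set r : ℚ := ((W * d : ℕ) : ℚ) with hrdef
  set A : ℚ := ((((n:ℕ):ℤ):ℚ) - (v:ℚ)) / ((((W*d:ℕ):ℤ)):ℚ) with hA
  set B : ℚ := (((-(n:ℤ) - 1 : ℤ):ℚ) - (v:ℚ)) / ((((W*d:ℕ):ℤ)):ℚ) with hB
  have hAB : A - B = (2 * n + 1) / r := by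
    rw [hA, hB, hrdef]; push_cast
    have h1 : (W:ℚ) ≠ 0 := by positivity
    have h2 : (d:ℚ) ≠ 0 := by positivity
    field_simp; ring
  have hle : B ≤ A := by
    have : 0 ≤ A - B := by rw [hAB]; positivity
    linarith
  have hfl : ⌊B⌋ ≤ ⌊A⌋ := Int.floor_le_floor hle
  rw [max_eq_left (by linarith)] at key
  have keyq : (c : ℚ) = (⌊A⌋ : ℚ) - ⌊B⌋ := by exact_mod_cast key
  have hq : |(c:ℚ) - (2 * n + 1) / r| ≤ 1 := by
    rw [keyq, ← hAB, abs_le]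
    have := Int.floor_le A
    have := Int.floor_le B
    have := Int.lt_floor_add_one A
    have := Int.lt_floor_add_one B
    constructor <;> linarith
  have := (Rat.cast_le (K := ℝ)).mpr hq
  rw [hrdef] at this
  push_cast at this
  exact this

lemma sum_moebius_e (l e : ℕ) (hl : l ≠ 0) :
    ∑ d ∈ l.divisors, (if e ∣ d then (ArithmeticFunction.moebius (l / d) : ℝ) else 0)
      = if e = l then 1 else 0 := by
  by_cases he : e ∣ l
  · obtain ⟨m, rfl⟩ := he
    have he0 : e ≠ 0 := by rintro rfl; simp at hl
    have hm0 : m ≠ 0 := by rintro rfl; simp at hl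
    rw [← Finset.sum_filter]
    have h1 : ∑ d ∈ (e * m).divisors with e ∣ d, (ArithmeticFunction.moebius (e * m / d) : ℝ)
        = ∑ k ∈ m.divisors, (ArithmeticFunction.moebius (m / k) : ℝ) := by
      symm
      refine Finset.sum_bij (fun k _ => e * k) ?_ ?_ ?_ ?_
      · intro k hk
        simp only [Finset.mem_filter, Nat.mem_divisors] at hk ⊢
        exact ⟨⟨Nat.mul_dvd_mul_left e hk.1, hl⟩, Dvd.intro _ rfl⟩
      · intro a _ b _ h
        exact Nat.eq_of_mul_eq_mul_left (Nat.pos_of_ne_zero he0) h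
      · intro d hd
        simp only [Finset.mem_filter, Nat.mem_divisors] at hd
        obtain ⟨⟨h1, _⟩, k, rfl⟩ := hd
        exact ⟨k, Nat.mem_divisors.mpr ⟨Nat.dvd_of_mul_dvd_mul_left (Nat.pos_of_ne_zero he0) h1, hm0⟩, rfl⟩
      · intro k hk
        rw [Nat.mul_div_mul_left _ _ (Nat.pos_of_ne_zero he0)]
    rw [h1, Nat.sum_div_divisors m (fun x => (ArithmeticFunction.moebius x : ℝ))]
    have h2 := congrArg (fun f : ArithmeticFunction ℤ => f m) ArithmeticFunction.coe_zeta_mul_moebius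
    simp only [ArithmeticFunction.coe_zeta_mul_apply] at h2
    have h3 : (∑ k ∈ m.divisors, (ArithmeticFunction.moebius k : ℝ)) = ((∑ k ∈ m.divisors, ArithmeticFunction.moebius k : ℤ) : ℝ) := by
      push_cast; rfl
    rw [h3, h2, ArithmeticFunction.one_apply]
    by_cases hm : m = 1
    · simp [hm]
    · have : e ≠ e * m := by
        intro h; apply hm
        have : e * 1 = e * m := by simpa using h
        exact (Nat.eq_of_mul_eq_mul_left (Nat.pos_of_ne_zero he0) this).symm
      simp [hm, this]
  · rw [if_neg (by rintro rfl; exact he dvd_rfl)]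
    apply Finset.sum_eq_zero
    intro d hd
    rw [if_neg]
    intro h; exact he (h.trans (Nat.dvd_of_mem_divisors hd))

lemma orth (l l' : ℕ) (hl : l ≠ 0) (hl' : l' ≠ 0) :
    ∑ d ∈ l.divisors, ∑ d' ∈ l'.divisors, (ArithmeticFunction.moebius (l / d) : ℝ) *
      (ArithmeticFunction.moebius (l' / d') : ℝ) * (Nat.gcd d d' : ℝ)
      = if l = l' then (Nat.totient l : ℝ) else 0 := by
  have h1 : ∀ d ∈ l.divisors, ∀ d' ∈ l'.divisors, (Nat.gcd d d' : ℝ) =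
      ∑ e ∈ l.divisors, (if e ∣ d then (1:ℝ) else 0) * (if e ∣ d' then (1:ℝ) else 0) * (Nat.totient e : ℝ) := by
    intro d hd d' hd'
    have hd0 : d ≠ 0 := (Nat.pos_of_mem_divisors hd).ne'
    conv_lhs => rw [← Nat.sum_totient (Nat.gcd d d')]
    push_cast
    have : (Nat.gcd d d').divisors = l.divisors.filter (fun e => e ∣ d ∧ e ∣ d') := by
      ext e
      simp only [Nat.mem_divisors, Finset.mem_filter, Nat.dvd_gcd_iff]
      constructor
      · rintro ⟨⟨h1, h2⟩, _⟩
        exact ⟨⟨h1.trans (Nat.dvd_of_mem_divisors hd), hl⟩, h1, h2⟩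
      · rintro ⟨_, h1, h2⟩
        exact ⟨⟨h1, h2⟩, Nat.gcd_ne_zero_left hd0⟩
    rw [this, Finset.sum_filter]
    apply Finset.sum_congr rfl
    intro e _
    by_cases h1 : e ∣ d <;> by_cases h2 : e ∣ d' <;> simp [h1, h2]
  calc _ = ∑ d ∈ l.divisors, ∑ d' ∈ l'.divisors, ∑ e ∈ l.divisors, (Nat.totient e : ℝ) *
        ((if e ∣ d then (ArithmeticFunction.moebius (l / d) : ℝ) else 0) *
        (if e ∣ d' then (ArithmeticFunction.moebius (l' / d') : ℝ) else 0)) := by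
        refine Finset.sum_congr rfl fun d hd => Finset.sum_congr rfl fun d' hd' => ?_
        rw [h1 d hd d' hd', Finset.mul_sum]
        refine Finset.sum_congr rfl fun e _ => ?_
        split_ifs <;> ring
    _ = ∑ e ∈ l.divisors, (Nat.totient e : ℝ) *
        ((∑ d ∈ l.divisors, if e ∣ d then (ArithmeticFunction.moebius (l / d) : ℝ) else 0) *
        (∑ d' ∈ l'.divisors, if e ∣ d' then (ArithmeticFunction.moebius (l' / d') : ℝ) else 0)) := by
        simp_rw [Finset.sum_mul_sum, Finset.mul_sum]
        symm
        rw [Finset.sum_comm]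
        apply Finset.sum_congr rfl
        intro d _
        rw [Finset.sum_comm]
    _ = _ := by
        simp_rw [sum_moebius_e _ _ hl, sum_moebius_e _ _ hl']
        rw [Finset.sum_eq_single l]
        · by_cases h : l = l' <;> simp [h]
        · intro e _ he; simp [he]
        · intro h; simp [hl] at h
/-- integers in `[-n, n]` congruent to `a` mod `W`. -/
noncomputable def apZ (n W : ℕ) (a : ℤ) : Finset ℤ := {z ∈ Finset.Ioc (-(n:ℤ) - 1) n | z ≡ a [ZMOD W]}

lemma abs_moebius_real_le (m : ℕ) : |(ArithmeticFunction.moebius m : ℝ)| ≤ 1 := by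
  have := ArithmeticFunction.abs_moebius_le_one (n := m)
  exact_mod_cast this

lemma pair_sum_s3 (n W : ℕ) (a : ℤ) (hW : 0 < W) (l l' : ℕ) (hl : l ≠ 0) (hl' : l' ≠ 0)
    (hlW : Nat.Coprime W l) (hlW' : Nat.Coprime W l') :
    |∑ z ∈ apZ n W a, ramC l z * ramC l' z -
      (2 * n + 1) / (W : ℝ) * (if l = l' then (Nat.totient l : ℝ) else 0)| ≤ (l:ℝ)^2 * (l':ℝ)^2 := by
  set cnt : ℕ → ℕ → ℝ := fun d d' =>
    ((Finset.card {z ∈ Finset.Ioc (-(n:ℤ) - 1) n | z ≡ a [ZMOD W] ∧ ((Nat.lcm d d' : ℕ):ℤ) ∣ z} : ℕ) : ℝ) with hcnt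
  have h1 : ∑ z ∈ apZ n W a, ramC l z * ramC l' z =
      ∑ d ∈ l.divisors, ∑ d' ∈ l'.divisors, ((d : ℝ) * (ArithmeticFunction.moebius (l / d) : ℝ)) *
        ((d' : ℝ) * (ArithmeticFunction.moebius (l' / d') : ℝ)) * cnt d d' := by
    unfold ramC
    simp_rw [Finset.sum_mul_sum]
    rw [Finset.sum_comm]
    apply Finset.sum_congr rfl
    intro d _
    rw [Finset.sum_comm]
    apply Finset.sum_congr rfl
    intro d' _
    rw [hcnt]
    simp only [apZ]
    rw [← Finset.filter_filter, Finset.card_filter]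
    push_cast
    rw [Finset.mul_sum]
    apply Finset.sum_congr rfl
    intro z _
    have : ((Nat.lcm d d' : ℕ) : ℤ) ∣ z ↔ (d:ℤ) ∣ z ∧ (d':ℤ) ∣ z := by
      simp only [Int.natCast_dvd, Nat.lcm_dvd_iff]
    by_cases e1 : (d:ℤ) ∣ z <;> by_cases e2 : (d':ℤ) ∣ z <;> simp [this, e1, e2]
  have h2 : (2 * n + 1) / (W : ℝ) * (if l = l' then (Nat.totient l : ℝ) else 0) =
      ∑ d ∈ l.divisors, ∑ d' ∈ l'.divisors, ((d : ℝ) * (ArithmeticFunction.moebius (l / d) : ℝ)) *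
        ((d' : ℝ) * (ArithmeticFunction.moebius (l' / d') : ℝ)) * ((2 * n + 1) / ((W : ℝ) * (Nat.lcm d d' : ℕ))) := by
    rw [← orth l l' hl hl', Finset.mul_sum]
    apply Finset.sum_congr rfl
    intro d hd
    rw [Finset.mul_sum]
    apply Finset.sum_congr rfl
    intro d' hd'
    have hd0 := Nat.pos_of_mem_divisors hd
    have hd0' := Nat.pos_of_mem_divisors hd'
    have hlc : 0 < Nat.lcm d d' := Nat.lcm_pos hd0 hd0'
    have hmul : (Nat.gcd d d' : ℝ) * (Nat.lcm d d' : ℝ) = d * d' := by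
      exact_mod_cast Nat.gcd_mul_lcm d d'
    have : (W:ℝ) ≠ 0 := by positivity
    have : (Nat.lcm d d' : ℝ) ≠ 0 := by positivity
    field_simp
    linear_combination (ArithmeticFunction.moebius (l / d) : ℝ) * (ArithmeticFunction.moebius (l' / d') : ℝ) * hmul
  rw [h1, h2, ← Finset.sum_sub_distrib]
  simp_rw [← Finset.sum_sub_distrib, ← mul_sub]
  have hcard : ∀ m : ℕ, ∑ d ∈ m.divisors, (d:ℝ) ≤ (m:ℝ)^2 := by
    intro m
    calc ∑ d ∈ m.divisors, (d:ℝ) ≤ ∑ d ∈ m.divisors, (m:ℝ) := by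
          apply Finset.sum_le_sum
          intro d hd
          exact_mod_cast Nat.divisor_le hd
      _ ≤ (m:ℝ)^2 := by
          rw [Finset.sum_const, nsmul_eq_mul, sq]
          gcongr
          exact Nat.card_divisors_le_self m
  calc _ ≤ ∑ d ∈ l.divisors, ∑ d' ∈ l'.divisors, (d:ℝ) * (d':ℝ) := by
        refine (Finset.abs_sum_le_sum_abs _ _).trans (Finset.sum_le_sum fun d hd => ?_)
        refine (Finset.abs_sum_le_sum_abs _ _).trans (Finset.sum_le_sum fun d' hd' => ?_)
        have hd0 := Nat.pos_of_mem_divisors hd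
        have hd0' := Nat.pos_of_mem_divisors hd'
        have hco : Nat.Coprime W (Nat.lcm d d') := by
          have c1 : Nat.Coprime W d := hlW.coprime_dvd_right (Nat.dvd_of_mem_divisors hd)
          have c2 : Nat.Coprime W d' := hlW'.coprime_dvd_right (Nat.dvd_of_mem_divisors hd')
          exact (c1.mul_right c2).coprime_dvd_right (Nat.lcm_dvd_mul d d')
        have hc := count_ap n W (Nat.lcm d d') hW (Nat.lcm_pos hd0 hd0') hco a
        rw [abs_mul, abs_mul, abs_mul, abs_mul, Nat.abs_cast, Nat.abs_cast]
        have m1 := abs_moebius_real_le (l / d)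
        have m2 := abs_moebius_real_le (l' / d')
        calc _ ≤ ((d:ℝ) * 1) * ((d':ℝ) * 1) * 1 := by gcongr
          _ = _ := by ring
    _ = (∑ d ∈ l.divisors, (d:ℝ)) * ∑ d' ∈ l'.divisors, (d':ℝ) := by rw [Finset.sum_mul_sum]
    _ ≤ _ := by
        apply mul_le_mul (hcard l) (hcard l')
        · positivity
        · positivity

/-- squarefree numbers up to `R` coprime to `W`. -/
def sqL (R W : ℕ) : Finset ℕ := {l ∈ Finset.Icc 1 R | Squarefree l ∧ Nat.Coprime W l}

noncomputable def sS (R W : ℕ) : ℝ := ∑ l ∈ sqL R W, ((Nat.totient l : ℝ))⁻¹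

lemma sieve_ap (n W R : ℕ) (a : ℤ) (hW : 0 < W) (hR : 1 ≤ R) :
    ((Finset.card {z ∈ apZ n W a | ∀ l ∈ sqL R W, Nat.Coprime l z.natAbs} : ℕ) : ℝ) ≤
      (2 * n + 1) / (W * sS R W) + (R:ℝ)^6 := by
  set L := sqL R W with hL
  set S := sS R W with hS
  have hmem : ∀ l ∈ L, l ≠ 0 ∧ l ≤ R ∧ Squarefree l ∧ Nat.Coprime W l ∧ 1 ≤ (Nat.totient l : ℝ) := by
    intro l hl
    simp only [hL, sqL, Finset.mem_filter, Finset.mem_Icc] at hl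
    refine ⟨by lia, hl.1.2, hl.2.1, hl.2.2, ?_⟩
    exact_mod_cast Nat.totient_pos.mpr (by lia)
  have hS1 : 1 ≤ S := by
    have h1 : 1 ∈ L := by simp [hL, sqL, hR]
    have := Finset.single_le_sum (f := fun l : ℕ => ((Nat.totient l : ℝ))⁻¹) (fun i _ => by positivity) h1
    simpa [hS, sS, ← hL] using this
  set g : ℤ → ℝ := fun z => ∑ l ∈ L, (ArithmeticFunction.moebius l : ℝ) * ((Nat.totient l : ℝ))⁻¹ * ramC l z with hg
  set G := ({z ∈ apZ n W a | ∀ l ∈ L, Nat.Coprime l z.natAbs} : Finset ℤ) with hG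
  have hgS : ∀ z ∈ G, g z = S := by
    intro z hz
    simp only [hG, Finset.mem_filter] at hz
    simp only [hg, hS, sS, ← hL]
    apply Finset.sum_congr rfl
    intro l hl
    rw [ramC_coprime (hmem l hl).1 (hz.2 l hl)]
    have : (ArithmeticFunction.moebius l : ℝ)^2 = 1 := by
      exact_mod_cast ArithmeticFunction.moebius_sq_eq_one_of_squarefree (hmem l hl).2.2.1
    linear_combination ((Nat.totient l : ℝ))⁻¹ * this
  have hlow : (G.card : ℝ) * S^2 ≤ ∑ z ∈ apZ n W a, (g z)^2 := by
    calc (G.card : ℝ) * S^2 = ∑ z ∈ G, (g z)^2 := by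
          rw [Finset.sum_congr rfl (fun z hz => by rw [hgS z hz]), Finset.sum_const, nsmul_eq_mul]
      _ ≤ _ := Finset.sum_le_sum_of_subset_of_nonneg (Finset.filter_subset _ _) (fun _ _ _ => sq_nonneg _)
  have hexp : ∑ z ∈ apZ n W a, (g z)^2 = ∑ l ∈ L, ∑ l' ∈ L,
      ((ArithmeticFunction.moebius l : ℝ) * ((Nat.totient l : ℝ))⁻¹) * ((ArithmeticFunction.moebius l' : ℝ) * ((Nat.totient l' : ℝ))⁻¹)
        * ∑ z ∈ apZ n W a, ramC l z * ramC l' z := by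
    simp only [hg, sq]
    simp_rw [Finset.sum_mul_sum]
    rw [Finset.sum_comm]
    apply Finset.sum_congr rfl
    intro l _
    rw [Finset.sum_comm]
    apply Finset.sum_congr rfl
    intro l' _
    rw [Finset.mul_sum]
    apply Finset.sum_congr rfl
    intro z _
    ring
  have hmain : (2 * n + 1) / (W:ℝ) * S = ∑ l ∈ L, ∑ l' ∈ L,
      ((ArithmeticFunction.moebius l : ℝ) * ((Nat.totient l : ℝ))⁻¹) * ((ArithmeticFunction.moebius l' : ℝ) * ((Nat.totient l' : ℝ))⁻¹)
        * ((2 * n + 1) / (W : ℝ) * (if l = l' then (Nat.totient l : ℝ) else 0)) := by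
    simp only [hS, sS, ← hL]
    rw [Finset.mul_sum]
    apply Finset.sum_congr rfl
    intro l hl
    rw [Finset.sum_eq_single l]
    · have : (ArithmeticFunction.moebius l : ℝ)^2 = 1 := by
        exact_mod_cast ArithmeticFunction.moebius_sq_eq_one_of_squarefree (hmem l hl).2.2.1
      have h0 : (Nat.totient l : ℝ) ≠ 0 := by linarith [(hmem l hl).2.2.2.2]
      simp only [if_true]
      field_simp
      linear_combination -this
    · intro l' _ h
      rw [if_neg (Ne.symm h)]; ring
    · intro h; exact absurd hl h
  have herr : |∑ z ∈ apZ n W a, (g z)^2 - (2 * n + 1) / (W:ℝ) * S| ≤ (R:ℝ)^6 := by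
    rw [hexp, hmain, ← Finset.sum_sub_distrib]
    simp_rw [← Finset.sum_sub_distrib, ← mul_sub]
    have hbd : ∀ l ∈ L, |(ArithmeticFunction.moebius l : ℝ) * ((Nat.totient l : ℝ))⁻¹| ≤ 1 := by
      intro l hl
      rw [abs_mul, abs_inv, Nat.abs_cast]
      have h1 := abs_moebius_real_le l
      have h2 : ((Nat.totient l : ℝ))⁻¹ ≤ 1 := inv_le_one_of_one_le₀ (hmem l hl).2.2.2.2
      calc _ ≤ (1:ℝ) * 1 := by gcongr
        _ = 1 := by ring
    have hLc : (L.card : ℝ) ≤ R := by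
      have : L.card ≤ (Finset.Icc 1 R).card := Finset.card_le_card (Finset.filter_subset _ _)
      simp only [Nat.card_Icc] at this
      exact_mod_cast this
    calc _ ≤ ∑ l ∈ L, ∑ l' ∈ L, (R:ℝ)^2 * (R:ℝ)^2 := by
          refine (Finset.abs_sum_le_sum_abs _ _).trans (Finset.sum_le_sum fun l hl => ?_)
          refine (Finset.abs_sum_le_sum_abs _ _).trans (Finset.sum_le_sum fun l' hl' => ?_)
          have := pair_sum_s3 n W a hW l l' (hmem l hl).1 (hmem l' hl').1 (hmem l hl).2.2.2.1 (hmem l' hl').2.2.2.1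
          rw [abs_mul, abs_mul]
          have r1 : (l:ℝ) ≤ R := by exact_mod_cast (hmem l hl).2.1
          have r2 : (l':ℝ) ≤ R := by exact_mod_cast (hmem l' hl').2.1
          calc _ ≤ 1 * 1 * ((l:ℝ)^2 * (l':ℝ)^2) := by
                have b1 := hbd l hl
                have b2 := hbd l' hl'
                gcongr
            _ ≤ _ := by rw [one_mul, one_mul]; gcongr
      _ = (L.card:ℝ) * ((L.card:ℝ) * ((R:ℝ)^2 * (R:ℝ)^2)) := by
          simp only [Finset.sum_const, nsmul_eq_mul]
      _ ≤ (R:ℝ) * ((R:ℝ) * ((R:ℝ)^2 * (R:ℝ)^2)) := by gcongr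
      _ = _ := by ring
  have hup := (abs_le.mp herr).2
  have hfin : (G.card : ℝ) * S^2 ≤ (2 * n + 1) / (W:ℝ) * S + (R:ℝ)^6 := by linarith
  have hWr : (0:ℝ) < W := by exact_mod_cast hW
  have e1 : ((2 * n + 1) / (W * S) + (R:ℝ)^6) * S^2 = (2 * n + 1) / (W:ℝ) * S + (R:ℝ)^6 * S^2 := by
    field_simp
  have e2 : (R:ℝ)^6 ≤ (R:ℝ)^6 * S^2 := by
    have : 1 ≤ S^2 := one_le_pow₀ hS1
    nlinarith [pow_nonneg (Nat.cast_nonneg (α := ℝ) R) 6]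
  have hSS : 0 < S^2 := by positivity
  exact le_of_mul_le_mul_right (by rw [e1]; linarith) hSS
lemma sum_inv_divisors (T : Finset ℕ) (hT : ∀ q ∈ T, q.Prime) :
    ∑ u ∈ (∏ q ∈ T, q).divisors, ((u:ℝ))⁻¹ = ∏ q ∈ T, (1 + ((q:ℝ))⁻¹) := by
  let F : ArithmeticFunction ℝ := ⟨fun n => ((n:ℝ))⁻¹, by simp⟩
  have hF : F.IsMultiplicative := by
    rw [ArithmeticFunction.IsMultiplicative.iff_ne_zero]
    refine ⟨by simp [F], ?_⟩
    intro m n _ _ _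
    simp [F, mul_comm]
  have hsq : Squarefree (∏ q ∈ T, q) := by
    apply Finset.squarefree_prod_of_pairwise_isCoprime
    · intro a ha b hb hab
      exact Nat.coprime_iff_isRelPrime.mp ((Nat.coprime_primes (hT a ha) (hT b hb)).mpr hab)
    · intro q hq; exact (hT q hq).prime.squarefree
  have := hF.prodPrimeFactors_one_add_of_squarefree hsq
  rw [Nat.primeFactors_prod hT] at this
  simpa [F] using this.symm

lemma log_le_sS (R W : ℕ) (hW : 0 < W) :
    Real.log ((R:ℝ) + 1) ≤ 2 * (∑ u ∈ W.divisors, ((u:ℝ))⁻¹) * sS R W := by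
  have h1 : Real.log ((R:ℝ) + 1) ≤ ∑ m ∈ Finset.Icc 1 R, ((m:ℝ))⁻¹ := by
    have := log_add_one_le_harmonic R
    rw [harmonic_eq_sum_Icc] at this
    push_cast at this
    exact this
  have hex : ∀ m : ℕ, ∃ t : ℕ × ℕ × ℕ, m ∈ Finset.Icc 1 R →
      t ∈ Finset.Ioo 0 (R+1) ×ˢ W.divisors ×ˢ sqL R W ∧ t.1 ^ 2 * (t.2.1 * t.2.2) = m := by
    intro m
    by_cases hm : m ∈ Finset.Icc 1 R
    · rw [Finset.mem_Icc] at hm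
      obtain ⟨s, b, hs, hb, hbs, hsq⟩ := Nat.sq_mul_squarefree_of_pos (show 0 < m by lia)
      refine ⟨(b, Nat.gcd s W, s / Nat.gcd s W), fun _ => ?_⟩
      have hgs : Nat.gcd s W ∣ s := Nat.gcd_dvd_left _ _
      have hmul : Nat.gcd s W * (s / Nat.gcd s W) = s := Nat.mul_div_cancel' hgs
      have hsm : s ≤ m := by rw [← hbs]; exact Nat.le_mul_of_pos_left _ (by positivity)
      have hbm : b ≤ m := by rw [← hbs, sq, mul_assoc]; exact Nat.le_mul_of_pos_right _ (by positivity)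
      refine ⟨?_, by simp only [hmul]; exact hbs⟩
      simp only [Finset.mem_product, Finset.mem_Ioo, Nat.mem_divisors, sqL, Finset.mem_filter, Finset.mem_Icc]
      refine ⟨⟨hb, by lia⟩, ⟨Nat.gcd_dvd_right _ _, hW.ne'⟩, ⟨?_, ?_⟩, ?_, ?_⟩
      · exact Nat.div_pos (Nat.le_of_dvd hs hgs) (Nat.gcd_pos_of_pos_left _ hs)
      · exact (Nat.div_le_self _ _).trans (by lia)
      · exact hsq.squarefree_of_dvd (Nat.div_dvd_of_dvd hgs)
      · exact (Nat.coprime_div_gcd_of_squarefree hsq hW.ne').symm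
    · exact ⟨(0,0,0), fun h => absurd h hm⟩
  choose t ht using hex
  have h2 : ∑ m ∈ Finset.Icc 1 R, ((m:ℝ))⁻¹ ≤
      ∑ x ∈ Finset.Ioo 0 (R+1) ×ˢ W.divisors ×ˢ sqL R W, ((x.1:ℝ)^2)⁻¹ * (((x.2.1:ℝ))⁻¹ * ((x.2.2:ℝ))⁻¹) := by
    have hinj : Set.InjOn t (Finset.Icc 1 R : Finset ℕ) := by
      intro a ha b hb hab
      rw [← (ht a ha).2, ← (ht b hb).2, hab]
    calc _ = ∑ m ∈ Finset.Icc 1 R, (((t m).1:ℝ)^2)⁻¹ * ((((t m).2.1:ℝ))⁻¹ * (((t m).2.2:ℝ))⁻¹) := by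
          apply Finset.sum_congr rfl
          intro m hm
          conv_lhs => rw [← (ht m hm).2]
          push_cast
          rw [mul_inv, mul_inv]
      _ = ∑ x ∈ (Finset.Icc 1 R).image t, ((x.1:ℝ)^2)⁻¹ * (((x.2.1:ℝ))⁻¹ * ((x.2.2:ℝ))⁻¹) := by
          rw [Finset.sum_image hinj]
      _ ≤ _ := by
          apply Finset.sum_le_sum_of_subset_of_nonneg
          · intro x hx
            obtain ⟨m, hm, rfl⟩ := Finset.mem_image.mp hx
            exact (ht m hm).1
          · intros; positivity
  have h3 : ∑ x ∈ Finset.Ioo 0 (R+1) ×ˢ W.divisors ×ˢ sqL R W, ((x.1:ℝ)^2)⁻¹ * (((x.2.1:ℝ))⁻¹ * ((x.2.2:ℝ))⁻¹)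
      = (∑ b ∈ Finset.Ioo 0 (R+1), ((b:ℝ)^2)⁻¹) * ((∑ u ∈ W.divisors, ((u:ℝ))⁻¹) * ∑ l ∈ sqL R W, ((l:ℝ))⁻¹) := by
    rw [Finset.sum_mul_sum, ← Finset.sum_product', Finset.sum_mul_sum, ← Finset.sum_product']
  have h4 : ∑ b ∈ Finset.Ioo 0 (R+1), ((b:ℝ)^2)⁻¹ ≤ 2 := by
    have := sum_Ioo_inv_sq_le (α := ℝ) 0 (R+1)
    simpa using this
  have h5 : ∑ l ∈ sqL R W, ((l:ℝ))⁻¹ ≤ sS R W := by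
    unfold sS
    apply Finset.sum_le_sum
    intro l hl
    simp only [sqL, Finset.mem_filter, Finset.mem_Icc] at hl
    have : 0 < Nat.totient l := Nat.totient_pos.mpr (by lia)
    have h' := Nat.totient_le l
    gcongr
  have h6 : 0 ≤ ∑ u ∈ W.divisors, ((u:ℝ))⁻¹ := by positivity
  rw [h3] at h2
  refine h1.trans (h2.trans ?_)
  rw [mul_assoc]
  gcongr

/-- good residues -/
noncomputable def resA (T : Finset ℕ) (k : ℤ) : Finset ℤ :=
  {a ∈ Finset.Ico (0:ℤ) ((∏ q ∈ T, q : ℕ) : ℤ) | ∀ q ∈ T, ¬ (q:ℤ) ∣ a ∧ ¬ (q:ℤ) ∣ (a - k)}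

lemma card_resA (T : Finset ℕ) (k : ℤ) (hT : ∀ q ∈ T, q.Prime) (hk : ∀ q ∈ T, ¬ (q:ℤ) ∣ k) :
    ((resA T k).card : ℝ) ≤ ∏ q ∈ T, ((q:ℝ) - 2) := by
  classical
  set B : ℕ → Finset ℤ := fun q => ((Finset.Ico (0:ℤ) q).erase 0).erase (k % q) with hB
  have hBc : ∀ q ∈ T, ((B q).card : ℝ) = (q:ℝ) - 2 := by
    intro q hq
    have hq2 := (hT q hq).two_le
    have hq0 : (0:ℤ) < q := by lia
    have hkq : k % q ≠ 0 := fun h => hk q hq (Int.dvd_of_emod_eq_zero h)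
    simp only [hB]
    rw [Finset.card_erase_of_mem, Finset.card_erase_of_mem, Int.card_Ico]
    · have : ((q:ℤ) - 0).toNat - 1 - 1 = q - 2 := by lia
      rw [this, Nat.cast_sub hq2]; norm_num
    · rw [Finset.mem_Ico]; lia
    · simp only [Finset.mem_erase, Finset.mem_Ico]
      exact ⟨hkq, Int.emod_nonneg _ hq0.ne', Int.emod_lt_of_pos _ hq0⟩
  have hle : (resA T k).card ≤ (Finset.pi T B).card := by
    apply Finset.card_le_card_of_injOn (fun (a : ℤ) (q : ℕ) (_ : q ∈ T) => a % (q:ℤ))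
    · intro a ha
      simp only [resA, Finset.coe_filter, Set.mem_ofPred_eq] at ha
      simp only [Finset.mem_coe, Finset.mem_pi, hB, Finset.mem_erase, Finset.mem_Ico]
      intro q hq
      have hq2 := (hT q hq).two_le
      have hq0 : (0:ℤ) < q := by lia
      refine ⟨?_, ?_, Int.emod_nonneg _ hq0.ne', Int.emod_lt_of_pos _ hq0⟩
      · intro h
        exact (ha.2 q hq).2 (Int.ModEq.dvd (Int.ModEq.symm h))
      · intro h
        exact (ha.2 q hq).1 (Int.dvd_of_emod_eq_zero h)
    · intro a ha b hb hab
      simp only [resA, Finset.coe_filter, Set.mem_ofPred_eq, Finset.mem_Ico] at ha hb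
      have hdvd : ((∏ q ∈ T, q : ℕ) : ℤ) ∣ b - a := by
        push_cast
        apply Finset.prod_dvd_of_coprime
        · intro p hp q hq hpq
          exact Nat.isCoprime_iff_coprime.mpr ((Nat.coprime_primes (hT p hp) (hT q hq)).mpr hpq)
        · intro q hq
          have := congrFun (congrFun hab q) hq
          exact Int.ModEq.dvd this
      have h2 : a ≡ b [ZMOD ((∏ q ∈ T, q : ℕ) : ℤ)] := Int.modEq_iff_dvd.mpr hdvd
      unfold Int.ModEq at h2
      rwa [Int.emod_eq_of_lt ha.1.1 ha.1.2, Int.emod_eq_of_lt hb.1.1 hb.1.2] at h2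
  calc ((resA T k).card : ℝ) ≤ ((Finset.pi T B).card : ℝ) := by exact_mod_cast hle
    _ = _ := by
      rw [Finset.card_pi]; push_cast
      exact Finset.prod_congr rfl hBc

/-- signed primes in `[-n,n]` -/
noncomputable def sP (n : ℕ) : Finset ℤ := {z ∈ Finset.Ioc (-(n:ℤ) - 1) n | z.natAbs.Prime}

lemma pair_bound (T : Finset ℕ) (k : ℤ) (hT : ∀ q ∈ T, q.Prime) (hk : ∀ q ∈ T, ¬ (q:ℤ) ∣ k)
    (n R : ℕ) (hR : 1 ≤ R) :
    ((Finset.card {z ∈ sP n | z - k ∈ sP n} : ℕ) : ℝ) ≤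
      (2 * n + 1) * (2 * Real.exp (- ∑ q ∈ T, ((q:ℝ))⁻¹) / Real.log ((R:ℝ) + 1)) +
        ((∏ q ∈ T, q : ℕ) : ℝ) * (R:ℝ)^6 + 2 * R + 4 * ((∏ q ∈ T, q : ℕ) : ℝ) + 3 := by
  classical
  set W := ∏ q ∈ T, q with hWdef
  have hW : 0 < W := Finset.prod_pos fun q hq => (hT q hq).pos
  have hsub : ({z ∈ sP n | z - k ∈ sP n} : Finset ℤ) ⊆
      (Finset.Icc (-(R:ℤ)) R ∪ Finset.Icc (-(W:ℤ)) W ∪ Finset.Icc (k - W) (k + W)) ∪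
      (resA T k).biUnion (fun a => {z ∈ apZ n W a | ∀ l ∈ sqL R W, Nat.Coprime l z.natAbs}) := by
    intro z hz
    simp only [sP, Finset.mem_filter, Finset.mem_Ioc] at hz
    obtain ⟨⟨hz1, hzp⟩, hz2, hzkp⟩ := hz
    by_cases h1 : z ∈ Finset.Icc (-(R:ℤ)) R ∪ Finset.Icc (-(W:ℤ)) W ∪ Finset.Icc (k - W) (k + W)
    · exact Finset.mem_union_left _ h1
    apply Finset.mem_union_right
    simp only [Finset.mem_union, Finset.mem_Icc, not_or] at h1
    obtain ⟨⟨hzR, hzW⟩, hzkW⟩ := h1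
    have hW0 : (0:ℤ) < W := by exact_mod_cast hW
    rw [Finset.mem_biUnion]
    refine ⟨z % W, ?_, ?_⟩
    · simp only [resA, Finset.mem_filter, Finset.mem_Ico]
      refine ⟨⟨Int.emod_nonneg _ hW0.ne', Int.emod_lt_of_pos _ hW0⟩, ?_⟩
      intro q hq
      have hqW : q ∣ W := Finset.dvd_prod_of_mem _ hq
      have hqle : q ≤ W := Nat.le_of_dvd hW hqW
      have hqW' : (q:ℤ) ∣ W := by exact_mod_cast hqW
      have hmod : (q:ℤ) ∣ z - z % W := hqW'.trans (Int.dvd_self_sub_emod)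
      constructor
      · intro h
        have : (q:ℤ) ∣ z := (Int.dvd_iff_dvd_of_dvd_sub hmod).mpr h
        have h3 := (Nat.prime_dvd_prime_iff_eq (hT q hq) hzp).mp (Int.natCast_dvd.mp this)
        lia
      · intro h
        have : (q:ℤ) ∣ z - k := by
          have e : z - k = (z - z % W) + (z % W - k) := by ring
          rw [e]; exact dvd_add hmod h
        have h3 := (Nat.prime_dvd_prime_iff_eq (hT q hq) hzkp).mp (Int.natCast_dvd.mp this)
        lia
    · simp only [apZ, Finset.mem_filter, Finset.mem_Ioc]
      refine ⟨⟨hz1, (Int.mod_modEq z W).symm⟩, ?_⟩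
      intro l hl
      simp only [sqL, Finset.mem_filter, Finset.mem_Icc] at hl
      exact (Nat.coprime_of_lt_prime (by lia) (by lia) hzp).symm
  have hcard := (Finset.card_le_card hsub).trans (Finset.card_union_le _ _)
  have hc1 : (Finset.Icc (-(R:ℤ)) R ∪ Finset.Icc (-(W:ℤ)) W ∪ Finset.Icc (k - W) (k + W)).card ≤
      (2 * R + 1) + (2 * W + 1) + (2 * W + 1) := by
    refine (Finset.card_union_le _ _).trans (Nat.add_le_add ((Finset.card_union_le _ _).trans (Nat.add_le_add ?_ ?_)) ?_)
    all_goals rw [Int.card_Icc]; lia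
  have hc2 : (((resA T k).biUnion (fun a => {z ∈ apZ n W a | ∀ l ∈ sqL R W, Nat.Coprime l z.natAbs})).card : ℝ)
      ≤ (resA T k).card * ((2 * n + 1) / (W * sS R W) + (R:ℝ)^6) := by
    calc _ ≤ ((∑ a ∈ resA T k, Finset.card {z ∈ apZ n W a | ∀ l ∈ sqL R W, Nat.Coprime l z.natAbs} : ℕ) : ℝ) := by
          exact_mod_cast Finset.card_biUnion_le
      _ ≤ ∑ a ∈ resA T k, ((2 * n + 1) / (W * sS R W) + (R:ℝ)^6) := by
          push_cast
          exact Finset.sum_le_sum fun a _ => sieve_ap n W R a hW hR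
      _ = _ := by rw [Finset.sum_const, nsmul_eq_mul]
  have hA1 : ((resA T k).card : ℝ) ≤ W := by
    have : (resA T k).card ≤ (Finset.Ico (0:ℤ) W).card := Finset.card_le_card (Finset.filter_subset _ _)
    rw [Int.card_Ico] at this
    have : (resA T k).card ≤ W := by lia
    exact_mod_cast this
  have hA2 := card_resA T k hT hk
  have hlogpos : 0 < Real.log ((R:ℝ) + 1) := Real.log_pos (by
    have : (1:ℝ) ≤ R := by exact_mod_cast hR
    linarith)
  have hlog := log_le_sS R W hW
  rw [hWdef, sum_inv_divisors T hT, ← hWdef] at hlog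
  have hPpos : 0 < ∏ q ∈ T, (1 + ((q:ℝ))⁻¹) := Finset.prod_pos fun q _ => by positivity
  have hSpos : 0 < sS R W := by
    by_contra h
    push Not at h
    nlinarith
  have hWr : (0:ℝ) < W := by exact_mod_cast hW
  have hprod : ((resA T k).card : ℝ) * ∏ q ∈ T, (1 + ((q:ℝ))⁻¹) ≤ W * Real.exp (- ∑ q ∈ T, ((q:ℝ))⁻¹) := by
    calc _ ≤ (∏ q ∈ T, ((q:ℝ) - 2)) * ∏ q ∈ T, (1 + ((q:ℝ))⁻¹) := by gcongr
      _ = ∏ q ∈ T, (((q:ℝ) - 2) * (1 + ((q:ℝ))⁻¹)) := by rw [Finset.prod_mul_distrib]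
      _ ≤ ∏ q ∈ T, ((q:ℝ) * Real.exp (-((q:ℝ))⁻¹)) := by
          apply Finset.prod_le_prod
          · intro q hq
            have : (2:ℝ) ≤ q := by exact_mod_cast (hT q hq).two_le
            have : 0 ≤ (q:ℝ) - 2 := by linarith
            positivity
          · intro q hq
            have h2 : (2:ℝ) ≤ q := by exact_mod_cast (hT q hq).two_le
            have he := Real.add_one_le_exp (-((q:ℝ))⁻¹)
            have hi : (q:ℝ) * ((q:ℝ))⁻¹ = 1 := mul_inv_cancel₀ (by linarith)
            have hi0 : 0 ≤ ((q:ℝ))⁻¹ := by positivity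
            nlinarith
      _ = _ := by
          rw [Finset.prod_mul_distrib, ← Real.exp_sum, Finset.sum_neg_distrib, hWdef]
          push_cast; rfl
  have hmain : ((resA T k).card : ℝ) * ((2 * n + 1) / (W * sS R W)) ≤
      (2 * n + 1) * (2 * Real.exp (- ∑ q ∈ T, ((q:ℝ))⁻¹) / Real.log ((R:ℝ) + 1)) := by
    have : ((resA T k).card : ℝ) / (W * sS R W) ≤ 2 * Real.exp (- ∑ q ∈ T, ((q:ℝ))⁻¹) / Real.log ((R:ℝ) + 1) := by
      rw [div_le_div_iff₀ (by positivity) hlogpos]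
      calc ((resA T k).card : ℝ) * Real.log ((R:ℝ) + 1) ≤ (resA T k).card * (2 * (∏ q ∈ T, (1 + ((q:ℝ))⁻¹)) * sS R W) := by gcongr
        _ = (2 * sS R W) * (((resA T k).card : ℝ) * ∏ q ∈ T, (1 + ((q:ℝ))⁻¹)) := by ring
        _ ≤ (2 * sS R W) * (W * Real.exp (- ∑ q ∈ T, ((q:ℝ))⁻¹)) := by gcongr
        _ = _ := by ring
    calc _ = (2 * n + 1) * (((resA T k).card : ℝ) / (W * sS R W)) := by ring
      _ ≤ _ := by gcongr
  have hR6 : ((resA T k).card : ℝ) * (R:ℝ)^6 ≤ W * (R:ℝ)^6 := by gcongr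
  have hcardR : ((Finset.card {z ∈ sP n | z - k ∈ sP n} : ℕ) : ℝ) ≤
    ((2 * R + 1) + (2 * W + 1) + (2 * W + 1) : ℝ) + (((resA T k).biUnion (fun a => {z ∈ apZ n W a | ∀ l ∈ sqL R W, Nat.Coprime l z.natAbs})).card : ℝ) := by
    have := hcard.trans (Nat.add_le_add_right hc1 _)
    exact_mod_cast this
  rw [mul_add] at hc2
  linarith
lemma exists_T (k : ℤ) (hk : k ≠ 0) (M : ℝ) : ∃ T : Finset ℕ, (∀ q ∈ T, q.Prime) ∧
    (∀ q ∈ T, ¬ (q:ℤ) ∣ k) ∧ M ≤ ∑ q ∈ T, ((q:ℝ))⁻¹ := by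
  classical
  by_contra hcon
  push Not at hcon
  apply not_summable_one_div_on_primes
  set D := ∑ q ∈ k.natAbs.divisors, ((q:ℝ))⁻¹ with hD
  refine summable_of_sum_le (c := M + D) ?_ ?_
  · intro i
    exact Set.indicator_nonneg (fun _ _ => by positivity) i
  · intro u
    set T := u.filter (fun q : ℕ => q.Prime ∧ ¬ (q:ℤ) ∣ k) with hT
    have h1 : ∑ q ∈ T, ((q:ℝ))⁻¹ < M := hcon T (by intro q hq; exact (Finset.mem_filter.mp hq).2.1)
      (by intro q hq; exact (Finset.mem_filter.mp hq).2.2)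
    have h2 : ∑ q ∈ u, Set.indicator {p : ℕ | p.Prime} (fun n : ℕ => (1:ℝ) / n) q
        ≤ ∑ q ∈ T ∪ k.natAbs.divisors, ((q:ℝ))⁻¹ := by
      have : ∀ q ∈ u, Set.indicator {p : ℕ | p.Prime} (fun n : ℕ => (1:ℝ) / n) q = if q.Prime then ((q:ℝ))⁻¹ else 0 := by
        intro q _
        by_cases h : q.Prime <;> simp [Set.indicator, h]
      rw [Finset.sum_congr rfl this, ← Finset.sum_filter]
      apply Finset.sum_le_sum_of_subset_of_nonneg
      · intro q hq
        rw [Finset.mem_filter] at hq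
        by_cases h : (q:ℤ) ∣ k
        · apply Finset.mem_union_right
          rw [Nat.mem_divisors]
          exact ⟨Int.natCast_dvd.mp h, by simpa using hk⟩
        · apply Finset.mem_union_left
          rw [hT, Finset.mem_filter]
          exact ⟨hq.1, hq.2, h⟩
      · intros; positivity
    have h3 : ∑ q ∈ T ∪ k.natAbs.divisors, ((q:ℝ))⁻¹ ≤ ∑ q ∈ T, ((q:ℝ))⁻¹ + D := by
      rw [hD, ← Finset.sum_union_inter]
      have : 0 ≤ ∑ q ∈ T ∩ k.natAbs.divisors, ((q:ℝ))⁻¹ := by positivity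
      linarith
    linarith

lemma card_sP_ge (n : ℕ) : (Nat.primeCounting n : ℝ) ≤ (sP n).card := by
  have : (Nat.primesLE n).card ≤ (sP n).card := by
    apply Finset.card_le_card_of_injOn (fun p : ℕ => (p : ℤ))
    · intro p hp
      have hp' := Nat.mem_primesLE.mp hp
      simp only [sP, Finset.coe_filter, Finset.mem_Ioc, Set.mem_ofPred_eq, Int.natAbs_natCast]
      exact ⟨by lia, hp'.2⟩
    · intro a _ b _ h
      simpa using h
  rw [Nat.primesLE_card_eq_primeCounting] at this
  exact_mod_cast this

lemma ev_card : ∀ᶠ n : ℕ in atTop, (n:ℝ) / (2 * Real.log n) ≤ (sP n).card := by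
  have h1 : Tendsto (fun x : ℝ => Real.log x / x) atTop (𝓝 0) := by
    have := Real.isLittleO_log_id_atTop.tendsto_div_nhds_zero
    simpa using this
  have h2 : ∀ᶠ n : ℕ in atTop, Real.log ((n:ℝ) + 1) / ((n:ℝ) + 1) < 1/20 := by
    have h3 : Tendsto (fun n : ℕ => ((n:ℝ) + 1)) atTop atTop :=
      tendsto_atTop_add_const_right _ _ tendsto_natCast_atTop_atTop
    exact (h1.comp h3).eventually (gt_mem_nhds (by norm_num))
  filter_upwards [h2, eventually_ge_atTop 2] with n hn hn2
  have hn2' : (2:ℝ) ≤ n := by exact_mod_cast hn2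
  have hlog : 0 < Real.log n := Real.log_pos (by linarith)
  refine le_trans ?_ ((Chebyshev.pi_ge n).trans (card_sP_ge n))
  rw [div_lt_iff₀ (by linarith)] at hn
  have hl2 := Real.log_two_gt_d9
  rw [div_le_div_iff₀ (by linarith) hlog]
  have : (n:ℝ) / 2 ≤ n * Real.log 2 - Real.log (n + 1) := by nlinarith
  nlinarith

lemma ratio_tendsto (k : ℤ) (hk : k ≠ 0) :
    Tendsto (fun n : ℕ => ((Finset.card {z ∈ sP n | z - k ∈ sP n} : ℕ) : ℝ) / (sP n).card) atTop (𝓝 0) := by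
  rw [tendsto_order]
  refine ⟨fun a ha => Eventually.of_forall fun n => lt_of_lt_of_le ha (by positivity), fun ε hε => ?_⟩
  obtain ⟨T, hT, hTk, hTM⟩ := exists_T k hk (-Real.log (ε / 288))
  set W : ℝ := ((∏ q ∈ T, q : ℕ) : ℝ) with hWdef
  have hE : Real.exp (- ∑ q ∈ T, ((q:ℝ))⁻¹) ≤ ε / 288 := by
    calc _ ≤ Real.exp (Real.log (ε / 288)) := Real.exp_le_exp.mpr (by linarith)
      _ = _ := Real.exp_log (by positivity)
  have hW0 : 0 ≤ W := by positivity
  have hlim : Tendsto (fun n : ℕ => (10 * W + 10) * (Real.log n / (n:ℝ)^(1/2:ℝ))) atTop (𝓝 0) := by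
    have h1 : Tendsto (fun x : ℝ => Real.log x / x^(1/2:ℝ)) atTop (𝓝 0) :=
      (isLittleO_log_rpow_atTop (by norm_num : (0:ℝ) < 1/2)).tendsto_div_nhds_zero
    have := (h1.comp tendsto_natCast_atTop_atTop).const_mul (10 * W + 10)
    simpa using this
  have hlim' := hlim.eventually (gt_mem_nhds (show (0:ℝ) < ε / 2 by linarith))
  filter_upwards [hlim', ev_card, eventually_ge_atTop 2] with n hn hcard hn2
  have hn2' : (2:ℝ) ≤ n := by exact_mod_cast hn2
  have hlog : 0 < Real.log n := Real.log_pos (by linarith)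
  set R := ⌊(n:ℝ)^(1/12:ℝ)⌋₊ with hR
  have hR1 : 1 ≤ R := by
    rw [hR, Nat.one_le_floor_iff]
    exact Real.one_le_rpow (by linarith) (by norm_num)
  have hRle : (R:ℝ) ≤ (n:ℝ)^(1/12:ℝ) := Nat.floor_le (by positivity)
  have hRge : (n:ℝ)^(1/12:ℝ) ≤ (R:ℝ) + 1 := (Nat.lt_floor_add_one _).le
  set s := (n:ℝ)^(1/2:ℝ) with hs
  have hs1 : 1 ≤ s := Real.one_le_rpow (by linarith) (by norm_num)
  have hss : s * s = n := by
    rw [hs, ← Real.rpow_add (by linarith)]; norm_num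
  have hR6 : (R:ℝ)^6 ≤ s := by
    calc (R:ℝ)^6 ≤ ((n:ℝ)^(1/12:ℝ))^6 := by gcongr
      _ = s := by rw [hs, ← Real.rpow_natCast, ← Real.rpow_mul (by linarith)]; norm_num
  have hRs : (R:ℝ) ≤ s := by
    refine hRle.trans (Real.rpow_le_rpow_of_exponent_le (by linarith) (by norm_num))
  have hlogR : Real.log n / 12 ≤ Real.log ((R:ℝ) + 1) := by
    calc Real.log n / 12 = Real.log ((n:ℝ)^(1/12:ℝ)) := by rw [Real.log_rpow (by linarith)]; ring
      _ ≤ _ := Real.log_le_log (by positivity) hRge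
  have hb := pair_bound T k hT hTk n R hR1
  rw [← hWdef] at hb
  set r := ((Finset.card {z ∈ sP n | z - k ∈ sP n} : ℕ) : ℝ) with hr
  set E := Real.exp (- ∑ q ∈ T, ((q:ℝ))⁻¹) with hEd
  have hE0 : 0 < E := Real.exp_pos _
  have hb2 : r ≤ 72 * n * E / Real.log n + (5 * W + 5) * s := by
    have hlp : 0 < Real.log ((R:ℝ) + 1) := by linarith
    have t1 : (2 * (n:ℝ) + 1) * (2 * E / Real.log ((R:ℝ) + 1)) ≤ 72 * n * E / Real.log n := by
      calc _ ≤ (3 * (n:ℝ)) * (2 * E / (Real.log n / 12)) := by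
            gcongr ?_ * (2 * E / ?_) <;> first | positivity | linarith
        _ = _ := by field_simp; ring
    have t2 : W * (R:ℝ)^6 ≤ W * s := by gcongr
    have t3 : W ≤ W * s := le_mul_of_one_le_right hW0 hs1
    linarith
  have hc0 : 0 < (n:ℝ) / (2 * Real.log n) := by positivity
  calc r / (sP n).card ≤ r / ((n:ℝ) / (2 * Real.log n)) := by
        apply div_le_div_of_nonneg_left _ hc0 hcard
        positivity
    _ ≤ (72 * n * E / Real.log n + (5 * W + 5) * s) / ((n:ℝ) / (2 * Real.log n)) := by gcongr
    _ = 144 * E + (10 * W + 10) * (Real.log n / s) := by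
        obtain ⟨y, hy⟩ : ∃ y, y = Real.log n := ⟨_, rfl⟩
        rw [← hy] at hlog ⊢
        rw [← hss]; field_simp; ring
    _ < ε := by linarith
lemma primesR_inter (n : ℕ) : PrimesR ∩ Set.Icc (-(n : ℝ)) (n : ℝ) =
    (((sP n).map ⟨(Int.cast : ℤ → ℝ), Int.cast_injective⟩ : Finset ℝ) : Set ℝ) := by
  ext x
  simp only [PrimesR, Set.mem_inter_iff, Set.mem_ofPred_eq, Set.mem_Icc, Finset.coe_map,
    Function.Embedding.coeFn_mk, Set.mem_image, Finset.mem_coe, sP, Finset.mem_filter, Finset.mem_Ioc]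
  constructor
  · rintro ⟨⟨p, hp, rfl | rfl⟩, h1, h2⟩
    · have : p ≤ n := by exact_mod_cast h2
      exact ⟨p, ⟨by lia, by simpa using hp⟩, by simp⟩
    · have h1' : (p:ℝ) ≤ n := by linarith
      have : p ≤ n := by exact_mod_cast h1'
      exact ⟨-p, ⟨by lia, by simpa using hp⟩, by simp⟩
  · rintro ⟨z, ⟨⟨h1, h2⟩, hp⟩, rfl⟩
    refine ⟨⟨z.natAbs, hp, ?_⟩, ?_, ?_⟩
    · rcases Int.natAbs_eq z with h | h
      · left; conv_lhs => rw [h]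
        simp
      · right; conv_lhs => rw [h]
        simp
    · have : -(n:ℤ) ≤ z := by lia
      exact_mod_cast this
    · exact_mod_cast h2

lemma autoCorr_eq (n : ℕ) (f : ℝ → ℂ) (K : ℕ) (hK : ∀ x : ℝ, (K:ℝ) < |x| → f x = 0) :
    autoCorr (PrimesR ∩ Set.Icc (-(n : ℝ)) (n : ℝ)) f =
      ∑ k ∈ Finset.Icc (-(K:ℤ)) K, f (k:ℝ) *
        ((((Finset.card {z ∈ sP n | z - k ∈ sP n} : ℕ) : ℝ) / (sP n).card : ℝ) : ℂ) := by
  classical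
  unfold autoCorr
  rw [primesR_inter, Set.ncard_coe_finset, Finset.card_map]
  simp_rw [finsum_mem_coe_finset]
  simp only [Finset.sum_map, Function.Embedding.coeFn_mk]
  have hin : ∀ x ∈ sP n, ∑ y ∈ sP n, f ((x:ℝ) - (y:ℝ)) =
      ∑ k ∈ Finset.Icc (-(K:ℤ)) K, if x - k ∈ sP n then f (k:ℝ) else 0 := by
    intro x _
    rw [← Finset.sum_filter]
    symm
    have hinj : Set.InjOn (fun k : ℤ => x - k) ({k ∈ Finset.Icc (-(K:ℤ)) K | x - k ∈ sP n} : Finset ℤ) := by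
      intro a _ b _ h
      simpa using h
    have himg : ∑ k ∈ Finset.Icc (-(K:ℤ)) K with x - k ∈ sP n, f (k:ℝ) =
        ∑ y ∈ ({k ∈ Finset.Icc (-(K:ℤ)) K | x - k ∈ sP n} : Finset ℤ).image (fun k : ℤ => x - k), f ((x:ℝ) - (y:ℝ)) := by
      rw [Finset.sum_image hinj]
      apply Finset.sum_congr rfl
      intro k _
      congr 1
      push_cast; ring
    rw [himg]
    apply Finset.sum_subset
    · intro y hy
      obtain ⟨k, hk, rfl⟩ := Finset.mem_image.mp hy
      exact (Finset.mem_filter.mp hk).2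
    · intro y hy hny
      apply hK
      by_contra hle
      push Not at hle
      apply hny
      have hle' : |x - y| ≤ (K:ℤ) := by exact_mod_cast hle
      rw [Finset.mem_image]
      refine ⟨x - y, ?_, by ring⟩
      rw [Finset.mem_filter, Finset.mem_Icc]
      refine ⟨abs_le.mp hle', by simpa using hy⟩
  rw [Finset.sum_congr rfl hin, Finset.sum_comm, Finset.mul_sum]
  apply Finset.sum_congr rfl
  intro k _
  rw [← Finset.sum_filter, Finset.sum_const, nsmul_eq_mul]
  push_cast
  ring

theorem primes_counting_autocorrelation_symmetric_intervals :
    ∀ f : ℝ → ℂ, Continuous f → HasCompactSupport f →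
      Tendsto (fun n : ℕ => autoCorr (PrimesR ∩ Set.Icc (-(n : ℝ)) (n : ℝ)) f)
        atTop (nhds (f 0)) := by
  intro f _ hcs
  obtain ⟨K, hK⟩ : ∃ K : ℕ, ∀ x : ℝ, (K:ℝ) < |x| → f x = 0 := by
    obtain ⟨C, hC⟩ := hcs.isCompact.isBounded.subset_closedBall (0:ℝ)
    obtain ⟨K, hK⟩ := exists_nat_ge C
    refine ⟨K, fun x hx => ?_⟩
    by_contra h
    have h1 := hC (subset_tsupport f h)
    rw [Metric.mem_closedBall, Real.dist_eq, sub_zero] at h1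
    linarith
  simp_rw [autoCorr_eq _ f K hK]
  have hsum : f 0 = ∑ k ∈ Finset.Icc (-(K:ℤ)) K, f (k:ℝ) * (((if k = 0 then 1 else 0 : ℝ)) : ℂ) := by
    rw [Finset.sum_eq_single 0]
    · simp
    · intro k _ hk; simp [hk]
    · intro h; simp at h
  rw [hsum]
  apply tendsto_finsetSum
  intro k _
  apply Tendsto.const_mul
  refine (Complex.continuous_ofReal.tendsto _).comp ?_
  by_cases hk : k = 0
  · subst hk
    rw [if_pos rfl]
    apply tendsto_const_nhds.congr'
    filter_upwards [eventually_ge_atTop 2] with n hn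
    have hne : (sP n).card ≠ 0 := by
      apply Finset.card_ne_zero_of_mem (a := 2)
      simp only [sP, Finset.mem_filter, Finset.mem_Ioc]
      exact ⟨by lia, Nat.prime_two⟩
    have : ({z ∈ sP n | z - 0 ∈ sP n} : Finset ℤ) = sP n := by
      rw [Finset.filter_eq_self]; intro z hz; simpa using hz
    rw [this, div_self (by exact_mod_cast hne)]
  · rw [if_neg hk]
    exact ratio_tendsto k hk
end
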